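/- arXiv:1010.5341 — 2 statements merged into one kernel-verified Lean document; each statement's English description precedes it below -/
import Mathlib

section
/- Let n and r be coprime positive integers with n > r, and let a_1, …, a_{r-1}, a_{r+1}, …, a_{n-1} be fixed integers. Then there are at most n² + n integers a_r such that the polynomial X^n + a_1X^{n-1} + ⋯ + a_{n-1}X + t, regarded as a polynomial in X over the rational function field ℚ(t) with constant coefficient the indeterminate t, does NOT have Galois group isomorphic to the full symmetric group S_n over ℚ(t). In other words, for all but at most n² + n integers a_r, the Galois group of the splitting field of this polynomial over ℚ(t) is isomorphic to S_n. -/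
open Polynomial
open scoped IntermediateField

/-!
Write the polynomial as `g(X) + t`. It is irreducible over `K(t)`, and a root `x` satisfies
`t = -g(x)`, so that `K(t)(x) = K(x)`. By Lüroth's theorem the fields between `K(g(x))` and `K(x)`
correspond to decompositions `g = u ∘ w`, hence the Galois group is primitive when `g` is
indecomposable. A nondegenerate critical point `c` that shares its value with no other critical
point gives a transposition: modulo a prime over `t = -g(c)` exactly two roots collide, and the
inertia group of that prime is nontrivial. By Jordan's theorem the Galois group is then symmetric.

Let `s = n - r` and `g = q + a X ^ s`. If all nonzero critical points of `g` are Morse and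
`g.coeff s ≠ 0`, then `g` is indecomposable and has a nonzero critical point. The remaining
parameters `a` are counted as follows. At a critical point `c ≠ 0` the equation `g'(c) = 0`
determines `a`, and `V = s g - X g'`, which does not depend on `a`, takes the value `s g(c)`.
Degenerate critical points are roots of `V'`, and those with the critical value `g(0)` are roots of
`V - V(0)`, which gives at most `n - 1` and `n` parameters. Two critical points `c` and `d = y c`
with the same value satisfy two equations in `(c, y)` whose resultant with respect to `y` has at
most `2 n (n - 1)` roots `c`. Every such parameter uses up two of them, which leaves `n (n - 1)`
parameters. Together with the one parameter for which `g.coeff s = 0`, the total is `n ^ 2 + n`.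
-/

section PolynomialLuroth

open IntermediateField.algebraAdjoinAdjoin

variable {K : Type*} [Field K]

lemma adjoin_simple_eq_of_mobius {L : Type*} [Field L] [Algebra K L] {h w : L} {a b c d : K}
    (hw : w ∉ (⊥ : IntermediateField K L))
    (hne : algebraMap K L c - h * algebraMap K L d ≠ 0)
    (heq : w * (algebraMap K L c - h * algebraMap K L d) =
      algebraMap K L a - h * algebraMap K L b) :
    K⟮h⟯ = K⟮w⟯ := by
  have hne' : algebraMap K L b - w * algebraMap K L d ≠ 0 := by
    intro hb
    have ha : algebraMap K L a = w * algebraMap K L c := by linear_combination h * hb - heq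
    rcases eq_or_ne d 0 with rfl | hd
    · have hc : algebraMap K L c ≠ 0 := by simpa using hne
      exact hw (IntermediateField.mem_bot.mpr
        ⟨a / c, by rw [map_div₀, ha, mul_div_cancel_right₀ _ hc]⟩)
    · have hd : algebraMap K L d ≠ 0 := by simpa using hd
      exact hw (IntermediateField.mem_bot.mpr
        ⟨b / d, by rw [map_div₀, div_eq_iff hd]; linear_combination hb⟩)
  refine le_antisymm ?_ ?_ <;> rw [IntermediateField.adjoin_simple_le_iff]
  · have hh : h = (algebraMap K L a - w * algebraMap K L c) /
        (algebraMap K L b - w * algebraMap K L d) :=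
      eq_div_of_mul_eq hne' (by linear_combination heq)
    have hw := IntermediateField.mem_adjoin_simple_self K w
    exact hh ▸ div_mem (sub_mem (algebraMap_mem _ a) (mul_mem hw (algebraMap_mem _ c)))
      (sub_mem (algebraMap_mem _ b) (mul_mem hw (algebraMap_mem _ d)))
  · have hh := IntermediateField.mem_adjoin_simple_self K h
    exact eq_div_of_mul_eq hne heq ▸
      div_mem (sub_mem (algebraMap_mem _ a) (mul_mem hh (algebraMap_mem _ b)))
      (sub_mem (algebraMap_mem _ c) (mul_mem hh (algebraMap_mem _ d)))

lemma adjoin_simple_C (c : K) : K⟮(RatFunc.C c : RatFunc K)⟯ = ⊥ :=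
  IntermediateField.adjoin_simple_eq_bot_iff.mpr (IntermediateField.mem_bot.mpr ⟨c, rfl⟩)

lemma ratFunc_algebraMap_ne_C {w : K[X]} (hw : 0 < w.natDegree) (c : K) :
    algebraMap K[X] (RatFunc K) w ≠ RatFunc.C c := fun h ↦
  hw.ne' (by simpa using ((RatFunc.eq_C_iff _).mp ⟨c, h⟩).1)

lemma algebraMap_notMem_bot {w : K[X]} (hw : 0 < w.natDegree) :
    algebraMap K[X] (RatFunc K) w ∉ (⊥ : IntermediateField K (RatFunc K)) := by
  rintro ⟨c, hc⟩
  exact ratFunc_algebraMap_ne_C hw c hc.symm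

lemma minpolyX_coeff (h : RatFunc K) (i : ℕ) :
    (h.minpolyX (RatFunc K)).coeff i =
      algebraMap K (RatFunc K) (h.num.coeff i) -
        h * algebraMap K (RatFunc K) (h.denom.coeff i) := by
  simp only [RatFunc.minpolyX, coeff_sub, coeff_C_mul, coeff_map]
  rfl

lemma minpolyX_dvd {h : RatFunc K} {g : K[X]} (hh : ¬ ∃ c, h = RatFunc.C c)
    (hg : algebraMap K[X] (RatFunc K) g ∈ K⟮h⟯) :
    h.minpolyX (RatFunc K) ∣ (g.map C - C g).map (algebraMap K[X] (RatFunc K)) := by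
  let G : K⟮h⟯[X] := g.map (algebraMap K K⟮h⟯) - C ⟨_, hg⟩
  have hG : aeval (RatFunc.X : RatFunc K) G = 0 := by
    simp [G, RatFunc.aeval_X_left_eq_algebraMap]
  have hdvd : h.minpolyX K⟮h⟯ ∣ G :=
    (Dvd.intro _ (minpoly.eq_of_irreducible (h.irreducible_minpolyX hh)
      h.minpolyX_aeval_X)).trans (minpoly.dvd _ _ hG)
  convert map_dvd (algebraMap K⟮h⟯ (RatFunc K)) hdvd using 1
  · exact (h.minpolyX_map K⟮h⟯ (RatFunc K)).symm
  · simp [G, Polynomial.map_map]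
    rfl

lemma monic_map_add_C {R A : Type*} [CommRing R] [CommRing A] {g : R[X]}
    (hg : g.Monic) (hg0 : 0 < g.natDegree) (φ : R →+* A) (a : A) :
    (g.map φ + C a).Monic := by
  nontriviality A
  exact (hg.map _).add_of_left (by
    rw [hg.degree_map]; exact degree_C_le.trans_lt (natDegree_pos_iff_degree_pos.mp hg0))

lemma exists_coeff_notMem_bot {P : (RatFunc K)[X]} (hP : P ≠ 0) (hroot : P.eval RatFunc.X = 0) :
    ∃ i, P.coeff i ∉ (⊥ : IntermediateField K (RatFunc K)) := by
  by_contra! hcon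
  obtain ⟨Q, hQ⟩ := (lifts_iff_coeff_lifts P).mpr fun i ↦ IntermediateField.mem_bot.mp (hcon i)
  rw [coe_mapRingHom] at hQ
  rw [← hQ, eval_map_algebraMap] at hroot
  exact hP (by rw [← hQ, transcendental_iff.mp RatFunc.transcendental_X Q hroot,
    Polynomial.map_zero])

theorem exists_eq_adjoin_polynomial {M : IntermediateField K (RatFunc K)} {g : K[X]}
    (hg : g.Monic) (hg0 : 0 < g.natDegree) (hgM : algebraMap K[X] (RatFunc K) g ∈ M) :
    ∃ w : K[X], M = K⟮algebraMap K[X] (RatFunc K) w⟯ := by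
  obtain ⟨h, rfl⟩ : ∃ h, M = K⟮h⟯ := ⟨_, RatFunc.Luroth.eq_adjoin_generator (E := M)⟩
  have hh : ¬ ∃ c, h = RatFunc.C c := by
    rintro ⟨c, rfl⟩
    exact algebraMap_notMem_bot hg0 (adjoin_simple_C c ▸ hgM)
  have hmonic : (g.map C - C g).Monic := by
    simpa [sub_eq_add_neg] using monic_map_add_C hg hg0 C (-g)
  obtain ⟨Q, hQ⟩ := IsIntegrallyClosed.eq_map_mul_C_of_dvd (RatFunc K)
    hmonic (minpolyX_dvd hh hgM)
  have hp0 : h.minpolyX (RatFunc K) ≠ 0 := by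
    rw [← h.minpolyX_map K⟮h⟯]
    exact (Polynomial.map_ne_zero_iff (algebraMap K⟮h⟯ (RatFunc K)).injective).mpr
      (h.irreducible_minpolyX hh).ne_zero
  have hroot : (h.minpolyX (RatFunc K)).eval RatFunc.X = 0 := by
    rw [← h.minpolyX_map K⟮h⟯, eval_map_algebraMap, h.minpolyX_aeval_X]
  have hlc := leadingCoeff_ne_zero.mpr hp0
  rw [← hQ, eval_mul, eval_C, mul_eq_zero, or_iff_left hlc] at hroot
  obtain ⟨i, hi⟩ := exists_coeff_notMem_bot
    (left_ne_zero_of_mul (hQ.trans_ne hp0)) hroot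
  have hcoeff := congrArg (coeff · i) hQ
  simp only [coeff_mul_C, coeff_map, leadingCoeff, minpolyX_coeff] at hcoeff hi hlc
  exact ⟨Q.coeff i, adjoin_simple_eq_of_mobius hi hlc hcoeff⟩

theorem exists_comp_of_mem_adjoin {g w : K[X]} (hw : 0 < w.natDegree)
    (h : algebraMap K[X] (RatFunc K) g ∈ K⟮algebraMap K[X] (RatFunc K) w⟯) :
    ∃ u : K[X], g = u.comp w := by
  have htr := RatFunc.transcendental_of_ne_C _ (not_exists.mpr (ratFunc_algebraMap_ne_C hw))
  obtain ⟨z, hz⟩ := (RatFunc.algEquivOfTranscendental _ htr).surjective ⟨_, h⟩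
  have hdenom : z.denom.comp w ≠ 0 := by
    intro h0
    rcases comp_eq_zero_iff.mp h0 with hz0 | ⟨-, hwC⟩
    · exact z.denom_ne_zero hz0
    · exact hw.ne' (hwC ▸ natDegree_C _)
  have hnum : z.num.comp w = g * z.denom.comp w := by
    apply IsFractionRing.injective K[X] (RatFunc K)
    replace hz := congrArg Subtype.val hz
    rwa [RatFunc.algEquivOfTranscendental_apply, aeval_algebraMap_apply, aeval_algebraMap_apply,
      ← comp_eq_aeval, ← comp_eq_aeval, div_eq_iff (by simpa using hdenom), ← map_mul] at hz
  have hunit : IsUnit (z.denom.comp w) :=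
    (z.isCoprime_num_denom.map (compRingHom w)).isUnit_of_dvd' (Dvd.intro_left _ hnum.symm) dvd_rfl
  have hdeg := natDegree_eq_zero_of_isUnit hunit
  rw [natDegree_comp, mul_eq_zero, or_iff_left hw.ne', z.monic_denom.natDegree_eq_zero] at hdeg
  exact ⟨z.num, by rw [hnum, hdeg, one_comp, mul_one]⟩

lemma mem_adjoin_comp_of_natDegree_eq_one {u : K[X]} (hu : u.natDegree = 1) (w : K[X]) :
    algebraMap K[X] (RatFunc K) w ∈ K⟮algebraMap K[X] (RatFunc K) (u.comp w)⟯ := by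
  obtain ⟨a, ha, b, rfl⟩ := natDegree_eq_one.mp hu
  have hw : w = C a⁻¹ * ((C a * X + C b).comp w - C b) := by
    simp [← mul_assoc, ← C_mul, ha]
  rw [congrArg (algebraMap K[X] (RatFunc K)) hw, map_mul, map_sub]
  exact mul_mem (algebraMap_mem _ a⁻¹)
    (sub_mem (IntermediateField.mem_adjoin_simple_self K _) (algebraMap_mem _ b))

/-- Indecomposability under composition. For a nonconstant polynomial it means, by Lüroth's theorem,
that no field lies strictly between `K(g)` and `K(X)`. -/
def CompIndecomposable (g : K[X]) : Prop :=
  ∀ u w : K[X], g = u.comp w → u.natDegree = 1 ∨ w.natDegree = 1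

theorem CompIndecomposable.eq_adjoin_or_eq_top {M : IntermediateField K (RatFunc K)} {g : K[X]}
    (hind : CompIndecomposable g) (hg : g.Monic) (hg0 : 0 < g.natDegree)
    (hgM : algebraMap K[X] (RatFunc K) g ∈ M) :
    M = K⟮algebraMap K[X] (RatFunc K) g⟯ ∨ M = ⊤ := by
  obtain ⟨w, rfl⟩ := exists_eq_adjoin_polynomial hg hg0 hgM
  have hw : 0 < w.natDegree := by
    by_contra! hw0
    rw [eq_C_of_natDegree_le_zero hw0, RatFunc.algebraMap_C, adjoin_simple_C] at hgM
    exact algebraMap_notMem_bot hg0 hgM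
  obtain ⟨u, rfl⟩ := exists_comp_of_mem_adjoin hw hgM
  rcases hind u w rfl with hu | hw1
  · refine .inl (le_antisymm ?_ ?_) <;> rw [IntermediateField.adjoin_simple_le_iff]
    exacts [mem_adjoin_comp_of_natDegree_eq_one hu w, hgM]
  · right
    have hX := mem_adjoin_comp_of_natDegree_eq_one hw1 X
    rwa [comp_X, RatFunc.algebraMap_X, ← IntermediateField.adjoin_simple_le_iff, RatFunc.adjoin_X,
      top_le_iff] at hX

end PolynomialLuroth

section SimpleTranscendental

variable {K E : Type*} [Field K] [Field E] [Algebra K E]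

theorem CompIndecomposable.eq_adjoin_aeval_or_eq_adjoin {g : K[X]} (hind : CompIndecomposable g)
    (hg : g.Monic) (hg0 : 0 < g.natDegree) {x : E} (hx : Transcendental K x)
    {M : IntermediateField K E} (hM : M ≤ K⟮x⟯) (hgM : aeval x g ∈ M) :
    M = K⟮aeval x g⟯ ∨ M = K⟮x⟯ := by
  let ψ : RatFunc K →ₐ[K] E := K⟮x⟯.val.comp (RatFunc.algEquivOfTranscendental x hx).toAlgHom
  have hψg : ψ (algebraMap K[X] (RatFunc K) g) = aeval x g := by
    simp [ψ]
  have hrange : ψ.fieldRange = K⟮x⟯ := by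
    refine SetLike.coe_injective ?_
    rw [AlgHom.coe_fieldRange, AlgHom.coe_comp, Set.range_comp]
    simp
  rw [← IntermediateField.map_comap_eq_self (hM.trans_eq hrange.symm)]
  rcases hind.eq_adjoin_or_eq_top hg hg0 (M := M.comap ψ) (hψg ▸ hgM : ψ _ ∈ M) with h | h
  · left
    rw [h, IntermediateField.adjoin_map, Set.image_singleton, hψg]
  · right
    rw [h, ← AlgHom.fieldRange_eq_map, hrange]

end SimpleTranscendental

section genericShift

variable {K : Type*} [Field K]

/-- The polynomial `g + t` with generic constant term, over the polynomial ring `K[t]`. Its image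
over `K(t)` is the polynomial whose Galois group is computed. -/
noncomputable def genericShift (g : K[X]) : K[X][X] := g.map C + C X

lemma monic_genericShift {g : K[X]} (hg : g.Monic) (hg0 : 0 < g.natDegree) :
    (genericShift g).Monic :=
  monic_map_add_C hg hg0 C X

lemma natDegree_genericShift (g : K[X]) : (genericShift g).natDegree = g.natDegree := by
  rw [genericShift, natDegree_add_C, natDegree_map_eq_of_injective C_injective]

/-- Exchanging `X` and `t` turns `g(X) + t` into a polynomial of degree one. -/
lemma swap_X_sub_C_neg (g : K[X]) : Bivariate.swap (X - C (-g)) = genericShift g := by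
  rw [map_sub, Bivariate.swap_Y, Bivariate.swap_C, genericShift]
  simp [add_comm]

theorem irreducible_map_genericShift {g : K[X]} (hg : g.Monic) (hg0 : 0 < g.natDegree) :
    Irreducible ((genericShift g).map (algebraMap K[X] (RatFunc K))) := by
  rw [← (monic_genericShift hg hg0).irreducible_iff_irreducible_map_fraction_map,
    ← swap_X_sub_C_neg]
  exact (MulEquiv.irreducible_iff (Bivariate.swap (R := K))).mpr (prime_X_sub_C _).irreducible

variable {S : Type*} [CommRing S] [Algebra K S] [Algebra K[X] S] [IsScalarTower K K[X] S]
  {g : K[X]} {x : S}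

lemma map_genericShift :
    (genericShift g).map (algebraMap K[X] S) =
      g.map (algebraMap K S) + C (algebraMap K[X] S X) := by
  rw [genericShift, Polynomial.map_add, map_C, Polynomial.map_map,
    IsScalarTower.algebraMap_eq K K[X] S, algebraMap_eq]

lemma algebraMap_X_eq_aeval_neg (hx : aeval x (genericShift g) = 0) :
    algebraMap K[X] S X = aeval x (-g) := by
  rw [← eval_map_algebraMap, map_genericShift, eval_add, eval_map_algebraMap, eval_C] at hx
  rw [map_neg, eq_neg_iff_add_eq_zero, add_comm, hx]

lemma transcendental_of_aeval_genericShift_eq_zero [FaithfulSMul K[X] S]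
    (hx : aeval x (genericShift g) = 0) : Transcendental K x := by
  intro hx'
  refine transcendental_X K
    ((isAlgebraic_algebraMap_iff (FaithfulSMul.algebraMap_injective K[X] S)).mp ?_)
  rw [algebraMap_X_eq_aeval_neg hx]
  exact (show IsIntegral K (aeval x (-g)) from
    adjoin_le_integralClosure hx'.isIntegral (aeval_mem_adjoin_singleton K x)).isAlgebraic

end genericShift

section Primitivity

variable {K E : Type*} [Field K] [Field E] [Algebra K[X] E] [Algebra (RatFunc K) E]
  [IsScalarTower K[X] (RatFunc K) E] {g : K[X]} {x : E}

open IntermediateField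

lemma adjoin_root_genericShift_ne_bot (hg : g.Monic) (hg1 : 1 < g.natDegree)
    (hx : aeval x (genericShift g) = 0) : (RatFunc K)⟮x⟯ ≠ ⊥ := by
  intro hbot
  obtain ⟨y, rfl⟩ := mem_bot.mp (hbot ▸ mem_adjoin_simple_self (RatFunc K) x)
  have hroot : ((genericShift g).map (algebraMap K[X] (RatFunc K))).IsRoot y := by
    rw [IsRoot, eval_map_algebraMap]
    simpa [aeval_algebraMap_apply] using hx
  have h1 := natDegree_eq_of_degree_eq_some (degree_eq_one_of_irreducible_of_root
    (irreducible_map_genericShift hg (by lia)) hroot)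
  rw [(monic_genericShift hg (by lia)).natDegree_map, natDegree_genericShift] at h1
  exact hg1.ne' h1

variable [Algebra K E] [IsScalarTower K (RatFunc K) E]

lemma adjoin_algebraMap_X :
    K⟮algebraMap K[X] E X⟯ = (IsScalarTower.toAlgHom K (RatFunc K) E).fieldRange := by
  rw [AlgHom.fieldRange_eq_map, ← RatFunc.adjoin_X, IntermediateField.adjoin_map,
    Set.image_singleton, IsScalarTower.coe_toAlgHom', ← RatFunc.algebraMap_X,
    ← IsScalarTower.algebraMap_apply]

lemma restrictScalars_adjoin_simple_le (hx : algebraMap K[X] E X ∈ K⟮x⟯) :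
    (RatFunc K)⟮x⟯.restrictScalars K ≤ K⟮x⟯ := by
  have hk : (IsScalarTower.toAlgHom K (RatFunc K) E).fieldRange ≤ K⟮x⟯ := by
    rwa [← adjoin_algebraMap_X, adjoin_simple_le_iff]
  let N := K⟮x⟯.toSubfield.toIntermediateField (K := RatFunc K) fun z ↦ hk ⟨z, rfl⟩
  exact show (RatFunc K)⟮x⟯ ≤ N from adjoin_simple_le_iff.mpr (mem_adjoin_simple_self K x)

theorem isAtom_adjoin_root_genericShift (hind : CompIndecomposable g) (hg : g.Monic)
    (hg1 : 1 < g.natDegree) (hx : aeval x (genericShift g) = 0) : IsAtom (RatFunc K)⟮x⟯ := by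
  have := IsScalarTower.to₁₂₄ K K[X] (RatFunc K) E
  have := FaithfulSMul.trans K[X] (RatFunc K) E
  have hX := algebraMap_X_eq_aeval_neg hx
  have hle : (RatFunc K)⟮x⟯.restrictScalars K ≤ K⟮x⟯ := restrictScalars_adjoin_simple_le
    (hX ▸ algebra_adjoin_le_adjoin _ _ (aeval_mem_adjoin_singleton K x))
  have hgX : aeval x g = algebraMap (RatFunc K) E (algebraMap K[X] (RatFunc K) (-X)) := by
    rw [← IsScalarTower.algebraMap_apply, map_neg, hX, map_neg, neg_neg]
  refine ⟨adjoin_root_genericShift_ne_bot hg hg1 hx, fun L hL ↦ ?_⟩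
  have hgL : aeval x g ∈ L.restrictScalars K := hgX ▸ L.algebraMap_mem _
  rcases hind.eq_adjoin_aeval_or_eq_adjoin hg (by lia)
    (transcendental_of_aeval_genericShift_eq_zero hx) (fun y hy ↦ hle (hL.le hy)) hgL with h | h
  · have hgk : K⟮aeval x g⟯ ≤ (IsScalarTower.toAlgHom K (RatFunc K) E).fieldRange :=
      adjoin_simple_le_iff.mpr ⟨_, hgX.symm⟩
    exact eq_bot_iff.mpr fun y (hy : y ∈ L.restrictScalars K) ↦ mem_bot.mpr (hgk (h ▸ hy))
  · have hxL : x ∈ L := (mem_restrictScalars K).mp (h ▸ mem_adjoin_simple_self K x)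
    exact absurd (adjoin_simple_le_iff.mpr hxL) hL.not_ge

end Primitivity

section GaloisAction

variable {F E : Type*} [Field F] [Field E] [Algebra F E]

lemma fixingSubgroup_adjoin_simple (x : E) :
    F⟮x⟯.fixingSubgroup = MulAction.stabilizer Gal(E/F) x := by
  ext σ
  rw [← Subgroup.zpowers_le, ← IntermediateField.le_iff_le, IntermediateField.adjoin_simple_le_iff,
    IntermediateField.mem_fixedField_iff, MulAction.mem_stabilizer_iff]
  exact ⟨fun h ↦ h σ (Subgroup.mem_zpowers σ), fun h τ hτ ↦
    (Subgroup.zpowers_le (H := MulAction.stabilizer Gal(E/F) x)).mpr h hτ⟩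

lemma isCoatom_stabilizer_of_isAtom_adjoin [FiniteDimensional F E] [IsGalois F E] {x : E}
    (hx : IsAtom F⟮x⟯) : IsCoatom (MulAction.stabilizer Gal(E/F) x) := by
  rw [← fixingSubgroup_adjoin_simple, ← isAtom_dual_iff_isCoatom]
  exact (IsGalois.intermediateFieldEquivSubgroup.isAtom_iff F⟮x⟯).mpr hx

variable {A : Type*} [CommRing A] [Algebra A F] [Algebra A E] [IsScalarTower A F E] {f : A[X]}

lemma splits_map_algebraMap_of_isSplittingField [IsSplittingField F E (f.map (algebraMap A F))] :
    (f.map (algebraMap A E)).Splits := by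
  rw [IsScalarTower.algebraMap_eq A F E, ← map_map]
  exact IsSplittingField.splits E _

lemma splits_integralClosure (hf : f.Monic) (hE : (f.map (algebraMap A E)).Splits) :
    (f.map (algebraMap A (integralClosure A E))).Splits := by
  have hmap : (f.map (algebraMap A (integralClosure A E))).map (algebraMap _ E) =
      f.map (algebraMap A E) := by rw [map_map, ← IsScalarTower.algebraMap_eq]
  refine Splits.of_splits_map_of_injective (i := algebraMap (integralClosure A E) E)
    Subtype.val_injective (hmap ▸ hE) fun a ha ↦ ⟨⟨a, f, hf, ?_⟩, rfl⟩
  rw [← eval_map, ← hmap]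
  exact (mem_roots'.mp ha).2

lemma coe_image_rootSet_integralClosure (hf : f.Monic) (hE : (f.map (algebraMap A E)).Splits) :
    (↑) '' f.rootSet (integralClosure A E) = (f.map (algebraMap A F)).rootSet E := by
  have hroots : (f.map (algebraMap A F)).rootSet E = f.rootSet E := by
    rw [rootSet, aroots, map_map, ← IsScalarTower.algebraMap_eq, rootSet]
  rw [hroots]
  exact (splits_integralClosure hf hE).image_rootSet_of_map_ne_zero
    (IsScalarTower.toAlgHom A (integralClosure A E) E) (hf.map _).ne_zero

lemma aeval_coe_integralClosure_of_mem_rootSet {x : integralClosure A E}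
    (hx : x ∈ f.rootSet (integralClosure A E)) :
    aeval (x : E) (f.map (algebraMap A F)) = 0 := by
  rw [aeval_map_algebraMap]
  exact (aeval_algebraMap_apply E x f).trans
    (by rw [aeval_eq_zero_of_mem_rootSet hx, map_zero])

theorem isPretransitive_rootSet_integralClosure [Normal F E]
    (hf : Irreducible (f.map (algebraMap A F))) :
    MulAction.IsPretransitive Gal(E/F) (f.rootSet (integralClosure A E)) where
  exists_smul_eq x y := by
    have h (z : f.rootSet (integralClosure A E)) :=
      minpoly.eq_of_irreducible hf (aeval_coe_integralClosure_of_mem_rootSet z.2)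
    obtain ⟨σ, hσ⟩ := (Normal.minpoly_eq_iff_mem_orbit E).mp ((h y).symm.trans (h x))
    exact ⟨σ, Subtype.ext (Subtype.ext hσ)⟩

lemma ncard_rootSet_integralClosure (hf : f.Monic) (hE : (f.map (algebraMap A E)).Splits)
    (hsep : (f.map (algebraMap A F)).Separable) :
    (f.rootSet (integralClosure A E)).ncard = f.natDegree := by
  rw [← Set.ncard_image_of_injective _ Subtype.val_injective,
    coe_image_rootSet_integralClosure (F := F) hf hE, ← Nat.card_coe_set_eq,
    Nat.card_eq_fintype_card,
    card_rootSet_eq_natDegree hsep (by rwa [map_map, ← IsScalarTower.algebraMap_eq]),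
    hf.natDegree_map]

theorem isPreprimitive_rootSet_integralClosure [FiniteDimensional F E] [IsGalois F E]
    (hf : Irreducible (f.map (algebraMap A F)))
    (hcard : 1 < (f.rootSet (integralClosure A E)).ncard)
    (hatom : ∀ x : E, aeval x (f.map (algebraMap A F)) = 0 → IsAtom F⟮x⟯) :
    MulAction.IsPreprimitive Gal(E/F) (f.rootSet (integralClosure A E)) := by
  have := isPretransitive_rootSet_integralClosure (E := E) hf
  have : Nontrivial (f.rootSet (integralClosure A E)) :=
    Finite.one_lt_card_iff_nontrivial.mp hcard
  obtain ⟨x⟩ : Nonempty (f.rootSet (integralClosure A E)) := inferInstance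
  rw [← MulAction.isCoatom_stabilizer_iff_preprimitive _ x]
  have hstab : MulAction.stabilizer Gal(E/F) x = MulAction.stabilizer Gal(E/F) (x : E) := by
    ext σ
    simp [MulAction.mem_stabilizer_iff, Subtype.ext_iff]
  exact hstab ▸ isCoatom_stabilizer_of_isAtom_adjoin
    (hatom _ (aeval_coe_integralClosure_of_mem_rootSet x.2))

theorem toPermHom_rootSet_integralClosure_injective (hf : f.Monic)
    [IsSplittingField F E (f.map (algebraMap A F))] :
    Function.Injective
      (MulAction.toPermHom Gal(E/F) (f.rootSet (integralClosure A E))) := by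
  have hE : (f.map (algebraMap A E)).Splits := splits_map_algebraMap_of_isSplittingField (F := F)
  refine (injective_iff_map_eq_one _).mpr fun σ hσ ↦ AlgEquiv.coe_toAlgHom_injective ?_
  refine AlgHom.ext_of_adjoin_eq_top (IsSplittingField.adjoin_rootSet E (f.map (algebraMap A F)))
    fun y hy ↦ ?_
  obtain ⟨x, hx, rfl⟩ := (coe_image_rootSet_integralClosure hf hE).symm.subset hy
  exact congrArg (fun z : f.rootSet (integralClosure A E) ↦ (z : E)) (Equiv.congr_fun hσ ⟨x, hx⟩)

end GaloisAction

section Inertia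

lemma exists_ne_one_mem_inertia {R S G : Type*} [CommRing R] [IsDedekindDomain R] [CommRing S]
    [IsDedekindDomain S] [Algebra R S] [Module.Finite R S] [Module.IsTorsionFree R S] [Group G]
    [Finite G] [MulSemiringAction G S] [IsGaloisGroup G R S] (P : Ideal S) [P.IsPrime]
    [PerfectField (P.under R).ResidueField] (hP : P.under R ≠ ⊥)
    (hram : (P.under R).map (algebraMap R S) ≤ P ^ 2) : ∃ σ ∈ P.inertia G, σ ≠ 1 := by
  by_contra! h
  have hcard : Nat.card (P.inertia G) = 1 :=
    Subgroup.card_eq_one.mpr ((Subgroup.eq_bot_iff_forall _).mpr h)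
  refine (Ideal.ramificationIdx'_ne_one_iff Ideal.map_comap_le).mpr hram ?_
  rw [Ideal.ramificationIdx'_eq_ramificationIdx _ _ hP,
    ← Ideal.ramificationIdxIn_eq_ramificationIdx (P.under R) P G,
    ← Ideal.card_inertia_eq_ramificationIdxIn (G := G) (P.under R) P, hcard]

lemma nonempty_algHom_of_isIntegral (A S L : Type*) [CommRing A] [CommRing S] [IsDomain S]
    [Algebra A S] [Algebra.IsIntegral A S] [FaithfulSMul A S] [Field L] [IsAlgClosed L]
    [Algebra A L] : Nonempty (S →ₐ[A] L) := by
  set q := RingHom.ker (algebraMap A L)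
  have hbot : RingHom.ker (algebraMap A S) ≤ q := by
    rw [(RingHom.injective_iff_ker_eq_bot _).mp (FaithfulSMul.algebraMap_injective A S)]
    exact bot_le
  have : q.IsPrime := RingHom.ker_isPrime _
  obtain ⟨P, hP, hcomap⟩ := Ideal.exists_ideal_over_prime_of_isIntegral_of_isDomain q hbot
  have : P.LiesOver q := ⟨hcomap.symm⟩
  let : Algebra (A ⧸ q) L := (RingHom.kerLift (algebraMap A L)).toAlgebra
  have : FaithfulSMul (A ⧸ q) L :=
    (faithfulSMul_iff_algebraMap_injective _ _).mpr (RingHom.kerLift_injective _)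
  have : Module.IsTorsionFree (A ⧸ q) (S ⧸ P) := FaithfulSMul.to_isTorsionFree _ _
  let π : S ⧸ P →ₐ[A ⧸ q] L := IsAlgClosed.lift
  exact ⟨⟨(π : S ⧸ P →+* L).comp (Ideal.Quotient.mk P),
    fun a ↦ π.commutes (Ideal.Quotient.mk q a)⟩⟩

lemma ncard_rootSet_quotient_ker {A S B : Type*} [CommRing A] [CommRing S] [CommRing B]
    [IsDomain B] [Algebra A S] [Algebra A B] (π : S →ₐ[A] B) {f : A[X]}
    (hf : f.Monic) (hS : (f.map (algebraMap A S)).Splits) :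
    (haveI := RingHom.ker_isPrime π; f.rootSet (S ⧸ RingHom.ker π)).ncard =
      (f.rootSet B).ncard := by
  have := RingHom.ker_isPrime π
  have hsplits : (f.map (algebraMap A (S ⧸ RingHom.ker π))).Splits := by
    rw [IsScalarTower.algebraMap_eq A S, ← map_map]
    exact hS.map _
  rw [← hsplits.image_rootSet_of_map_ne_zero (Ideal.kerLiftAlg π) (hf.map _).ne_zero,
    Set.ncard_image_of_injective _ (Ideal.kerLiftAlg_injective π)]

lemma sq_minpoly_dvd {K L : Type*} [Field K] [PerfectField K] [Field L] [Algebra K L] {c : L}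
    (hc : IsIntegral K c) {h : K[X]} (h0 : aeval c h = 0) (h1 : aeval c (derivative h) = 0) :
    minpoly K c ^ 2 ∣ h := by
  obtain ⟨k, rfl⟩ := minpoly.dvd K c h0
  have hsep := (PerfectField.separable_of_irreducible (minpoly.irreducible hc))
  have hder := hsep.aeval_derivative_ne_zero (minpoly.aeval K c)
  have hk : aeval c k = 0 := by simpa [hder] using h1
  rw [sq]
  exact mul_dvd_mul_left _ (minpoly.dvd K c hk)

variable {K : Type*} [Field K]

lemma map_under_ker_le_sq {S L : Type*} [PerfectField K] [CommRing S] [Algebra K S]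
    [Algebra K[X] S] [IsScalarTower K K[X] S] [Field L] [Algebra K L] (π : S →ₐ[K] L)
    {g : K[X]} {x : S} (hx : aeval x (genericShift g) = 0) (hint : IsIntegral K (π x))
    (hcrit : aeval (π x) (derivative g) = 0) :
    ((RingHom.ker π).under K[X]).map (algebraMap K[X] S) ≤ RingHom.ker π ^ 2 := by
  rw [Ideal.map_le_iff_le_comap]
  intro r hr
  have hrx : algebraMap K[X] S r = aeval x (r.comp (-g)) := by
    rw [aeval_comp, ← algebraMap_X_eq_aeval_neg hx, aeval_algebraMap_apply, aeval_X_left_apply]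
  have h0 : aeval (π x) (r.comp (-g)) = 0 := by
    rw [aeval_algHom_apply, ← hrx]
    exact hr
  have h1 : aeval (π x) (derivative (r.comp (-g))) = 0 := by
    rw [derivative_comp, map_mul, derivative_neg, map_neg, hcrit, neg_zero, zero_mul]
  obtain ⟨k, hk⟩ := sq_minpoly_dvd hint h0 h1
  rw [Ideal.mem_comap, hrx, hk, map_mul, map_pow]
  refine Ideal.mul_mem_right _ _ (Ideal.pow_mem_pow ?_ 2)
  rw [RingHom.mem_ker, ← aeval_algHom_apply, minpoly.aeval]

end Inertia

section IsMorsePoint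

variable {L : Type*} [Field L]

/-- A nondegenerate critical point whose critical value is attained at no other critical point:
over its critical value `g` has exactly one collision of roots. -/
structure IsMorsePoint (g : L[X]) (c : L) : Prop where
  eval_derivative : (derivative g).eval c = 0
  eval_derivative_derivative : (derivative (derivative g)).eval c ≠ 0
  eq_of_eval_eq : ∀ d, (derivative g).eval d = 0 → g.eval d = g.eval c → d = c

lemma IsMorsePoint.rootMultiplicity_le [DecidableEq L] {g : L[X]} {c : L}
    (hc : IsMorsePoint g c) (d : L) :
    (g - C (g.eval c)).rootMultiplicity d ≤ if d = c then 2 else 1 := by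
  have hg : g - C (g.eval c) ≠ 0 := fun h ↦ hc.eval_derivative_derivative <| by
    rw [sub_eq_zero.mp h, derivative_C, derivative_zero, eval_zero]
  split_ifs with hd
  · by_contra! h
    exact hc.eval_derivative_derivative <| by
      simpa [hd, IsRoot] using isRoot_iterate_derivative_of_lt_rootMultiplicity h
  · by_contra! h
    have hroot := (one_lt_rootMultiplicity_iff_isRoot hg).mp h
    simp only [IsRoot, derivative_sub, derivative_C, sub_zero, eval_sub, eval_C] at hroot
    exact hd (hc.eq_of_eval_eq d hroot.2 (sub_eq_zero.mp hroot.1))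

lemma IsMorsePoint.natDegree_le_card_roots_toFinset [IsAlgClosed L] [DecidableEq L]
    {g : L[X]} {c : L} (hc : IsMorsePoint g c) :
    g.natDegree ≤ (g - C (g.eval c)).roots.toFinset.card + 1 := by
  have hle : (g - C (g.eval c)).roots ≤ c ::ₘ (g - C (g.eval c)).roots.dedup := by
    refine Multiset.le_iff_count.mpr fun d ↦ ?_
    have hmult := hc.rootMultiplicity_le d
    rw [← count_roots] at hmult
    rw [Multiset.count_cons, Multiset.count_dedup]
    by_cases hd : d ∈ (g - C (g.eval c)).roots
    · rw [if_pos hd]; split_ifs at hmult ⊢ <;> lia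
    · rw [Multiset.count_eq_zero_of_notMem hd]; exact Nat.zero_le _
  rw [← natDegree_sub_C (a := g.eval c),
    (IsAlgClosed.splits (g - C (g.eval c))).natDegree_eq_card_roots]
  exact (Multiset.card_le_card hle).trans_eq (Multiset.card_cons _ _)

end IsMorsePoint

section Transposition

variable {K E L : Type*} [Field K] [Field E] [Field L] [Algebra K L] {g : K[X]}

lemma under_ker_ne_bot {S : Type*} [CommRing S] [Algebra K[X] S] [Algebra K[X] L]
    [IsScalarTower K K[X] L] (π : S →ₐ[K[X]] L) (hX : IsIntegral K (algebraMap K[X] L X)) :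
    (RingHom.ker π).under K[X] ≠ ⊥ := by
  refine (Submodule.ne_bot_iff _).mpr ⟨minpoly K (algebraMap K[X] L X), ?_, minpoly.ne_zero hX⟩
  rw [Ideal.mem_comap, RingHom.mem_ker, π.commutes, ← aeval_X_left_apply (minpoly K _),
    ← aeval_algebraMap_apply, minpoly.aeval]

lemma natDegree_le_ncard_rootSet_of_isMorsePoint [IsAlgClosed L] [Algebra K[X] L]
    [IsScalarTower K K[X] L] {c : L} (hc : IsMorsePoint (g.map (algebraMap K L)) c)
    (hX : algebraMap K[X] L X = -aeval c g) :
    g.natDegree ≤ ((genericShift g).rootSet L).ncard + 1 := by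
  classical
  rw [rootSet, aroots, map_genericShift, hX, C_neg, ← sub_eq_add_neg, ← eval_map_algebraMap,
    Set.ncard_coe_finset, ← g.natDegree_map (algebraMap K L)]
  exact hc.natDegree_le_card_roots_toFinset

variable [CharZero K]

lemma isIntegral_of_aeval_derivative_eq_zero (hg0 : 0 < g.natDegree) {c : L}
    (hc : aeval c (derivative g) = 0) : IsIntegral K c :=
  IsAlgebraic.isIntegral
    ⟨derivative g, fun h ↦ hg0.ne' (derivative_eq_zero.mp h), hc⟩

variable [Algebra K E] [Algebra K[X] E] [IsScalarTower K K[X] E] [Algebra (RatFunc K) E]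
  [IsScalarTower K[X] (RatFunc K) E] [FiniteDimensional (RatFunc K) E] [IsGalois (RatFunc K) E]

theorem exists_ne_one_mem_inertia_ker [Algebra K[X] L] [IsScalarTower K K[X] L]
    (hg0 : 0 < g.natDegree) (π : integralClosure K[X] E →ₐ[K[X]] L) {x : integralClosure K[X] E}
    (hx : aeval x (genericShift g) = 0) (hcrit : aeval (π x) (derivative g) = 0) :
    haveI := RingHom.ker_isPrime π
    ∃ σ ∈ (RingHom.ker π).inertia Gal(E/RatFunc K), σ ≠ 1 := by
  have := RingHom.ker_isPrime π
  have := IsIntegralClosure.isDedekindDomain K[X] (RatFunc K) E (integralClosure K[X] E)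
  have := IsIntegralClosure.finite K[X] (RatFunc K) E (integralClosure K[X] E)
  have := IsIntegralClosure.isFractionRing_of_finite_extension K[X] (RatFunc K) E
    (integralClosure K[X] E)
  have := IsGaloisGroup.of_isFractionRing Gal(E/RatFunc K) K[X] (integralClosure K[X] E)
    (RatFunc K) E
  have hint := isIntegral_of_aeval_derivative_eq_zero hg0 hcrit
  have hX : IsIntegral K (algebraMap K[X] L X) := by
    rw [← π.commutes, algebraMap_X_eq_aeval_neg hx, ← AlgHom.restrictScalars_apply K,
      ← aeval_algHom_apply]
    exact adjoin_le_integralClosure hint (aeval_mem_adjoin_singleton K _)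
  have : CharZero ((RingHom.ker π).under K[X]).ResidueField :=
    charZero_of_injective_algebraMap (algebraMap K _).injective
  have := FaithfulSMul.trans K[X] (RatFunc K) E
  exact exists_ne_one_mem_inertia _ (under_ker_ne_bot π hX)
    (map_under_ker_le_sq (π.restrictScalars K) hx hint hcrit)

theorem exists_isSwap_of_isMorsePoint [IsAlgClosed L]
    [IsSplittingField (RatFunc K) E ((genericShift g).map (algebraMap K[X] (RatFunc K)))]
    (hg : g.Monic) (hg0 : 0 < g.natDegree) {c : L}
    (hc : IsMorsePoint (g.map (algebraMap K L)) c)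
    [DecidableEq ((genericShift g).rootSet (integralClosure K[X] E))] :
    ∃ σ : Gal(E/RatFunc K), (MulAction.toPermHom _
      ((genericShift g).rootSet (integralClosure K[X] E)) σ).IsSwap := by
  let : Algebra K[X] L := (aeval (-aeval c g) : K[X] →ₐ[K] L).toRingHom.toAlgebra
  have hX : algebraMap K[X] L X = -aeval c g := aeval_X _
  have hf := monic_genericShift hg hg0
  have hE : ((genericShift g).map (algebraMap K[X] E)).Splits :=
    splits_map_algebraMap_of_isSplittingField (F := RatFunc K)
  have hS := splits_integralClosure hf hE
  have := FaithfulSMul.trans K[X] (RatFunc K) E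
  obtain ⟨π⟩ := nonempty_algHom_of_isIntegral K[X] (integralClosure K[X] E) L
  obtain ⟨x, hx, hxc⟩ : c ∈ π '' (genericShift g).rootSet (integralClosure K[X] E) := by
    rw [hS.image_rootSet_of_map_ne_zero π (hf.map _).ne_zero, hf.mem_rootSet,
      ← eval_map_algebraMap, map_genericShift, hX, eval_add, eval_map_algebraMap, eval_C,
      add_neg_cancel]
  have hcrit : aeval (π x) (derivative g) = 0 := by
    rw [hxc, ← eval_map_algebraMap, ← derivative_map, hc.eval_derivative]
  obtain ⟨σ, hσ, hσ1⟩ := exists_ne_one_mem_inertia_ker hg0 π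
    (aeval_eq_zero_of_mem_rootSet hx) hcrit
  have := RingHom.ker_isPrime π
  refine ⟨σ, (hS.toPermHom_apply_eq_one_or_isSwap_of_ncard_le_of_mem_inertia _ ?_ σ hσ).resolve_left
    fun h ↦ hσ1 (toPermHom_rootSet_integralClosure_injective hf (h.trans (map_one _).symm))⟩
  rw [ncard_rootSet_quotient_ker π hf hS]
  exact ((ncard_rootSet_le _ _).trans_eq (natDegree_genericShift g)).trans
    (natDegree_le_ncard_rootSet_of_isMorsePoint hc hX)

end Transposition

section GaloisGroup

lemma toPermHom_surjective_of_isSwap {G α : Type*} [Group G] [MulAction G α] [Finite α]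
    [DecidableEq α] [MulAction.IsPreprimitive G α] {σ : G}
    (hσ : (MulAction.toPermHom G α σ).IsSwap) :
    Function.Surjective (MulAction.toPermHom G α) := by
  let φ : G → (MulAction.toPermHom G α).range := (MulAction.toPermHom G α).rangeRestrict
  let f : α →ₑ[φ] α := ⟨id, fun _ _ ↦ rfl⟩
  rw [← MonoidHom.range_eq_top]
  exact Equiv.Perm.subgroup_eq_top_of_isPreprimitive_of_isSwap_mem
    (MulAction.IsPreprimitive.of_surjective (f := f) Function.surjective_id) _ hσ ⟨σ, rfl⟩

variable {K E L : Type*} [Field K] [CharZero K] [Field E] [Algebra K E] [Algebra K[X] E]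
  [Algebra (RatFunc K) E] [IsScalarTower K (RatFunc K) E] [IsScalarTower K[X] (RatFunc K) E]
  [Field L] [IsAlgClosed L] [Algebra K L] {g : K[X]}

theorem nonempty_gal_mulEquiv_perm_of_isMorsePoint
    [IsSplittingField (RatFunc K) E ((genericShift g).map (algebraMap K[X] (RatFunc K)))]
    (hg : g.Monic) (hg1 : 1 < g.natDegree) (hind : CompIndecomposable g) {c : L}
    (hc : IsMorsePoint (g.map (algebraMap K L)) c) :
    Nonempty (Gal(E/RatFunc K) ≃* Equiv.Perm (Fin g.natDegree)) := by
  classical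
  have := IsScalarTower.to₁₂₄ K K[X] (RatFunc K) E
  have hg0 := zero_lt_one.trans hg1
  have hf := monic_genericShift hg hg0
  have hirr := irreducible_map_genericShift hg hg0
  have : FiniteDimensional (RatFunc K) E :=
    IsSplittingField.finiteDimensional E ((genericShift g).map (algebraMap K[X] (RatFunc K)))
  have : IsGalois (RatFunc K) E := .of_separable_splitting_field hirr.separable
  have hE : ((genericShift g).map (algebraMap K[X] E)).Splits :=
    splits_map_algebraMap_of_isSplittingField (F := RatFunc K)
  have hcard := ncard_rootSet_integralClosure hf hE hirr.separable
  rw [natDegree_genericShift] at hcard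
  have := isPreprimitive_rootSet_integralClosure (E := E) hirr (hg1.trans_eq hcard.symm)
    fun x hx ↦ isAtom_adjoin_root_genericShift hind hg hg1 (by rwa [aeval_map_algebraMap] at hx)
  obtain ⟨σ, hσ⟩ := exists_isSwap_of_isMorsePoint (E := E) hg hg0 hc
  refine ⟨(MulEquiv.ofBijective (MulAction.toPermHom Gal(E/RatFunc K)
    ((genericShift g).rootSet (integralClosure K[X] E)))
    ⟨toPermHom_rootSet_integralClosure_injective hf, toPermHom_surjective_of_isSwap hσ⟩).trans
    (Equiv.permCongrHom (Finite.equivFinOfCardEq hcard))⟩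

end GaloisGroup

section IsMorseAwayFromZero

variable {L : Type*} [Field L]

/-- Every critical point other than `0` is a Morse point. The point `0` is exempt because for
`1 < s` the polynomials `q + a X ^ s` with fixed `q` share their behaviour at `0`. -/
def IsMorseAwayFromZero (g : L[X]) : Prop :=
  ∀ c, c ≠ 0 → (derivative g).eval c = 0 → IsMorsePoint g c

variable [IsAlgClosed L]

lemma eq_C_leadingCoeff_mul_X_sub_C_pow {p : L[X]} {c : L} (h : ∀ x ∈ p.roots, x = c) :
    p = C p.leadingCoeff * (X - C c) ^ p.natDegree := by
  have hp := IsAlgClosed.splits p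
  conv_lhs => rw [hp.eq_prod_roots, Multiset.eq_replicate_card.mpr h, ← hp.natDegree_eq_card_roots]
  rw [Multiset.map_replicate, Multiset.prod_replicate]

lemma IsMorsePoint.eval_derivative_ne_zero_of_comp {u w : L[X]} {c : L}
    (hc : IsMorsePoint (u.comp w) c) (hw : 1 < w.natDegree) :
    (derivative u).eval (w.eval c) ≠ 0 := by
  intro hu
  have hroots : ∀ d ∈ (w - C (w.eval c)).roots, d = c := fun d hd ↦ by
    have hwd : w.eval d = w.eval c := by
      simpa [sub_eq_zero] using isRoot_of_mem_roots hd
    exact hc.eq_of_eval_eq d (by simp [derivative_comp, hwd, hu]) (by simp [hwd])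
  have hwc : (derivative w).eval c = 0 := by
    have h := congrArg (eval c ∘ derivative) (eq_C_leadingCoeff_mul_X_sub_C_pow hroots)
    simpa [derivative_X_sub_C_pow, Nat.sub_ne_zero_of_lt hw] using h
  exact hc.eval_derivative_derivative (by simp [derivative_comp, hwc, hu])

lemma dvd_of_coeff_comp_ne_zero {u w : L[X]} {b : L} {s : ℕ} (hw : 0 < w.natDegree)
    (hroots : ∀ d ∈ (w - C b).roots, d = 0) (hs : (u.comp w).coeff s ≠ 0) :
    w.natDegree ∣ s := by
  have hexp : u.comp w =
      expand L w.natDegree (u.comp (C (w - C b).leadingCoeff * X + C b)) := by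
    have h := eq_C_leadingCoeff_mul_X_sub_C_pow hroots
    rw [C_0, sub_zero, natDegree_sub_C, sub_eq_iff_eq_add] at h
    rw [expand_eq_comp_X_pow, comp_assoc]
    congr 1
    simpa using h
  by_contra hns
  exact hs (by rw [hexp, coeff_expand hw, if_neg hns])

variable [CharZero L] {g : L[X]} {s : ℕ}

theorem IsMorseAwayFromZero.compIndecomposable (hg : IsMorseAwayFromZero g)
    (hs : g.coeff s ≠ 0) (hco : g.natDegree.Coprime s) : CompIndecomposable g := by
  rintro u w rfl
  rw [natDegree_comp] at hco
  have hpos : w.natDegree ≠ 0 ∧ u.natDegree ≠ 0 := by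
    by_contra! h
    have h0 : u.natDegree * w.natDegree = 0 := by grind
    rw [eq_C_of_natDegree_eq_zero (natDegree_comp.trans h0), coeff_C,
      (Nat.coprime_zero_left s).mp (h0 ▸ hco)] at hs
    exact hs (if_neg one_ne_zero)
  by_contra! hdeg
  have hw : 1 < w.natDegree := by lia
  obtain ⟨b, hb⟩ := IsAlgClosed.exists_root (derivative u)
    (fun h ↦ by
      have hu : (derivative u).natDegree = 0 := natDegree_eq_of_degree_eq_some h
      rw [natDegree_derivative] at hu
      lia)
  have hroots : ∀ d ∈ (w - C b).roots, d = 0 := fun d hd ↦ by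
    have hwd : w.eval d = b := by simpa [sub_eq_zero] using isRoot_of_mem_roots hd
    subst hwd
    by_contra hd0
    refine (hg d hd0 ?_).eval_derivative_ne_zero_of_comp hw hb
    rw [derivative_comp, eval_mul, eval_comp, hb, mul_zero]
  exact hdeg.2 (Nat.eq_one_of_dvd_coprimes hco (dvd_mul_left _ _)
    (dvd_of_coeff_comp_ne_zero (by lia) hroots hs))

lemma exists_ne_zero_eval_derivative_eq_zero (hs0 : 0 < s) (hsn : s < g.natDegree)
    (hs : g.coeff s ≠ 0) : ∃ c, c ≠ 0 ∧ (derivative g).eval c = 0 := by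
  have hs' : (derivative g).coeff (s - 1) ≠ 0 := by
    rw [coeff_derivative, Nat.sub_add_cancel hs0]
    exact mul_ne_zero hs (Nat.cast_add_one_ne_zero _)
  by_contra! h
  have hpow := eq_C_leadingCoeff_mul_X_sub_C_pow (p := derivative g) (c := 0) fun d hd ↦ by
    by_contra hd0
    exact h d hd0 (isRoot_of_mem_roots hd)
  rw [hpow, C_0, sub_zero, natDegree_derivative, coeff_C_mul_X_pow, if_neg (by lia)] at hs'
  exact hs' rfl

end IsMorseAwayFromZero

section MorseGaloisGroup

lemma CompIndecomposable.of_map {K L : Type*} [Field K] [Field L] [Algebra K L] {g : K[X]}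
    (h : CompIndecomposable (g.map (algebraMap K L))) :
    CompIndecomposable g := by
  rintro u w rfl
  rw [Polynomial.map_comp] at h
  simpa using h _ _ rfl

variable {K L : Type*} [Field K] [CharZero K] [Field L] [IsAlgClosed L] [Algebra K L] {g : K[X]}

theorem IsMorseAwayFromZero.nonempty_gal_mulEquiv_perm
    (hmorse : IsMorseAwayFromZero (g.map (algebraMap K L))) (hg : g.Monic) {s : ℕ} (hs0 : 0 < s)
    (hsn : s < g.natDegree) (hs : g.coeff s ≠ 0) (hco : g.natDegree.Coprime s) :
    Nonempty (((genericShift g).map (algebraMap K[X] (RatFunc K))).Gal ≃*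
      Equiv.Perm (Fin g.natDegree)) := by
  have : CharZero L := charZero_of_injective_algebraMap (algebraMap K L).injective
  have hdeg : (g.map (algebraMap K L)).natDegree = g.natDegree := natDegree_map _
  have hs' : (g.map (algebraMap K L)).coeff s ≠ 0 := by simpa using hs
  obtain ⟨c, hc0, hc⟩ := exists_ne_zero_eval_derivative_eq_zero hs0 (hdeg ▸ hsn) hs'
  have hind := hmorse.compIndecomposable hs' (hdeg ▸ hco)
  exact nonempty_gal_mulEquiv_perm_of_isMorsePoint hg (by lia) hind.of_map (hmorse c hc0 hc)

end MorseGaloisGroup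

section Resultant

lemma natDegree_det_le {R ι : Type*} [CommRing R] [Fintype ι] [DecidableEq ι]
    (M : Matrix ι ι R[X]) {d : ℕ} (h : ∀ i j, (M i j).natDegree ≤ d) :
    M.det.natDegree ≤ Fintype.card ι * d := by
  rw [Matrix.det_apply]
  refine natDegree_sum_le_of_forall_le _ _ fun σ _ ↦ ?_
  calc (Equiv.Perm.sign σ • ∏ i, M (σ i) i).natDegree
      ≤ ∑ i, (M (σ i) i).natDegree := (natDegree_smul_le _ _).trans (natDegree_prod_le _ _)
    _ ≤ ∑ _i : ι, d := Finset.sum_le_sum fun i _ ↦ h (σ i) i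
    _ = Fintype.card ι * d := by simp

lemma natDegree_resultant_le {R : Type*} [CommRing R] {P Q : R[X][X]} {d : ℕ}
    (hP : ∀ i, (P.coeff i).natDegree ≤ d) (hQ : ∀ i, (Q.coeff i).natDegree ≤ d) (m n : ℕ) :
    (resultant P Q m n).natDegree ≤ (m + n) * d := by
  refine (natDegree_det_le _ (d := d) fun i j ↦ ?_).trans (by simp)
  induction j using Fin.addCases <;>
    simp only [sylvester, Matrix.of_apply, Fin.addCases_left, Fin.addCases_right] <;>
    split_ifs <;> simp [hP, hQ]

lemma eval_resultant_eq_zero_iff {L : Type*} [Field L] [IsAlgClosed L] {P Q : L[X][X]} {z : L}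
    (hP : P.leadingCoeff.eval z ≠ 0) (hQ : Q.leadingCoeff.eval z ≠ 0) :
    (resultant P Q).eval z = 0 ↔ ∃ y, P.evalEval z y = 0 ∧ Q.evalEval z y = 0 := by
  have hP0 : P.map (evalRingHom z) ≠ 0 := fun h ↦ hP (by
    simpa using congrArg (coeff · P.natDegree) h)
  have hres : (resultant P Q).eval z =
      resultant (P.map (evalRingHom z)) (Q.map (evalRingHom z)) := by
    rw [natDegree_map_of_leadingCoeff_ne_zero _ hP, natDegree_map_of_leadingCoeff_ne_zero _ hQ,
      resultant_map_map, coe_evalRingHom]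
  rw [hres, resultant_eq_zero_iff, isCoprime_iff_aeval_ne_zero_of_isAlgClosed L L]
  simp [hP0, map_evalRingHom_eval]

end Resultant

section DilationQuotient

variable {L : Type*} [Field L]

/-- In the inner variable `z` and the outer variable `y`, with `n = p.natDegree`, the polynomial
`z ^ n * (p (y / z) - y ^ m * p (1 / z)) / (y - 1)`. Its zeros with `z ≠ 0` describe the
`(c, d) = (1 / z, y / z)` with `p d = (d / c) ^ m * p c`, the trivial solutions `c = d` being
divided out. -/
noncomputable def dilationQuotient (p : L[X]) (m : ℕ) : L[X][X] :=
  ∑ j ∈ Finset.range (p.natDegree + 1), C (C (p.coeff j) * X ^ (p.natDegree - j)) *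
    (∑ i ∈ Finset.range j, X ^ i - ∑ i ∈ Finset.range m, X ^ i)

variable {p : L[X]} {m : ℕ}

lemma coeff_dilationQuotient (p : L[X]) (m i : ℕ) : (dilationQuotient p m).coeff i =
    ∑ j ∈ Finset.range (p.natDegree + 1), C (p.coeff j) * X ^ (p.natDegree - j) *
      ((if i < j then 1 else 0) - (if i < m then 1 else 0)) := by
  simp [dilationQuotient, finsetSum_coeff, coeff_C_mul, coeff_X_pow, -map_mul, -map_pow]

lemma natDegree_coeff_dilationQuotient_le (p : L[X]) (m i : ℕ) :
    ((dilationQuotient p m).coeff i).natDegree ≤ p.natDegree := by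
  rw [coeff_dilationQuotient]
  refine natDegree_sum_le_of_forall_le _ _ fun j _ ↦ ?_
  have hcoeff : ((if i < j then 1 else 0) - (if i < m then 1 else 0) : L[X]).natDegree = 0 := by
    split_ifs <;> simp
  refine natDegree_mul_le.trans ?_
  rw [hcoeff, add_zero]
  exact (natDegree_C_mul_X_pow_le _ _).trans (Nat.sub_le _ _)

lemma coeff_dilationQuotient_natDegree_sub_one (hm : m < p.natDegree) :
    (dilationQuotient p m).coeff (p.natDegree - 1) = C p.leadingCoeff := by
  rw [coeff_dilationQuotient, Finset.sum_range_succ, Finset.sum_eq_zero fun j hj ↦ ?_]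
  · simp [show p.natDegree - 1 < p.natDegree by lia, show ¬ p.natDegree - 1 < m by lia]
  · have := Finset.mem_range.mp hj
    simp [show ¬ p.natDegree - 1 < j by lia, show ¬ p.natDegree - 1 < m by lia]

lemma natDegree_dilationQuotient (hm : m < p.natDegree) :
    (dilationQuotient p m).natDegree = p.natDegree - 1 := by
  refine natDegree_eq_of_le_of_coeff_ne_zero (natDegree_le_iff_coeff_eq_zero.mpr fun i hi ↦ ?_) ?_
  · rw [coeff_dilationQuotient, Finset.sum_eq_zero fun j hj ↦ ?_]
    have := Finset.mem_range.mp hj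
    simp [show ¬ i < j by lia, show ¬ i < m by lia]
  · rw [coeff_dilationQuotient_natDegree_sub_one hm, C_ne_zero, leadingCoeff_ne_zero]
    exact ne_zero_of_natDegree_gt hm

lemma eval_leadingCoeff_dilationQuotient_ne_zero (hm : m < p.natDegree) (z : L) :
    (dilationQuotient p m).leadingCoeff.eval z ≠ 0 := by
  rw [leadingCoeff, natDegree_dilationQuotient hm, coeff_dilationQuotient_natDegree_sub_one hm,
    eval_C]
  exact leadingCoeff_ne_zero.mpr (ne_zero_of_natDegree_gt hm)

lemma evalEval_dilationQuotient (p : L[X]) (m : ℕ) (z y : L) :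
    (dilationQuotient p m).evalEval z y = ∑ j ∈ Finset.range (p.natDegree + 1),
      p.coeff j * z ^ (p.natDegree - j) *
        (∑ i ∈ Finset.range j, y ^ i - ∑ i ∈ Finset.range m, y ^ i) := by
  simp [dilationQuotient, evalEval, eval_finsetSum]

lemma evalEval_zero_dilationQuotient (p : L[X]) (m : ℕ) (y : L) :
    (dilationQuotient p m).evalEval 0 y =
      p.leadingCoeff * (∑ i ∈ Finset.range p.natDegree, y ^ i - ∑ i ∈ Finset.range m, y ^ i) := by
  rw [evalEval_dilationQuotient, Finset.sum_range_succ, Finset.sum_eq_zero fun j hj ↦ ?_]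
  · simp
  · simp [Nat.sub_ne_zero_of_lt (Finset.mem_range.mp hj)]

lemma evalEval_inv_dilationQuotient_mul {c : L} (hc : c ≠ 0) (y : L) :
    (dilationQuotient p m).evalEval c⁻¹ y * (y - 1) * c ^ p.natDegree =
      p.eval (c * y) - y ^ m * p.eval c := by
  rw [evalEval_dilationQuotient, eval_eq_sum_range, eval_eq_sum_range, Finset.mul_sum,
    ← Finset.sum_sub_distrib, Finset.sum_mul, Finset.sum_mul]
  refine Finset.sum_congr rfl fun j hj ↦ ?_
  have hj : j ≤ p.natDegree := Finset.mem_range_succ_iff.mp hj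
  calc _ = p.coeff j * (c⁻¹ ^ (p.natDegree - j) * c ^ (p.natDegree - j + j)) *
        ((∑ i ∈ Finset.range j, y ^ i) * (y - 1) - (∑ i ∈ Finset.range m, y ^ i) * (y - 1)) := by
        rw [Nat.sub_add_cancel hj]; ring
    _ = _ := by
        rw [geom_sum_mul, geom_sum_mul, pow_add, ← mul_assoc (c⁻¹ ^ _), ← mul_pow,
          inv_mul_cancel₀ hc]
        ring

lemma evalEval_dilationQuotient_eq_zero {c d : L} (hc : c ≠ 0) (hcd : c ≠ d)
    (h : p.eval d = (d / c) ^ m * p.eval c) :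
    (dilationQuotient p m).evalEval c⁻¹ (d / c) = 0 := by
  have key := evalEval_inv_dilationQuotient_mul (p := p) (m := m) hc (d / c)
  have hdc : d / c - 1 ≠ 0 := sub_ne_zero.mpr fun h ↦ hcd ((div_eq_one_iff_eq hc).mp h).symm
  simpa [mul_div_cancel₀ _ hc, h, hc, hdc] using key

end DilationQuotient

section Collision

lemma two_mul_encard_setOf_collision_le {α β : Type*} (S : Set α) (f : α → β) :
    2 * {b | ∃ x ∈ S, ∃ y ∈ S, x ≠ y ∧ f x = b ∧ f y = b}.encard ≤ S.encard := by
  set B := {b | ∃ x ∈ S, ∃ y ∈ S, x ≠ y ∧ f x = b ∧ f y = b}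
  choose x hxS y hyS hne hx hy using fun b : B ↦ b.2
  have hdisj : Disjoint (Set.range x) (Set.range y) := by
    rw [Set.disjoint_left]
    rintro _ ⟨b, rfl⟩ ⟨b', hbb'⟩
    have : b' = b := Subtype.ext (by rw [← hy b', hbb', hx b])
    exact hne b (this ▸ hbb').symm
  have hxinj : x.Injective := fun b b' h ↦ Subtype.ext (by rw [← hx b, h, hx b'])
  have hyinj : y.Injective := fun b b' h ↦ Subtype.ext (by rw [← hy b, h, hy b'])
  calc 2 * B.encard = (Set.range x ∪ Set.range y).encard := by
        rw [Set.encard_union_eq hdisj, ← Set.image_univ, ← Set.image_univ,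
          hxinj.encard_image, hyinj.encard_image, two_mul, Set.encard_univ, Set.encard]
    _ ≤ S.encard := Set.encard_le_encard
        (Set.union_subset (Set.range_subset_iff.mpr hxS) (Set.range_subset_iff.mpr hyS))

lemma encard_setOf_eval_eq_zero_le {R : Type*} [CommRing R] [IsDomain R] {p : R[X]} (hp : p ≠ 0) :
    {c | p.eval c = 0}.encard ≤ p.natDegree := by
  classical
  have hset : {c | p.eval c = 0} = ↑p.roots.toFinset := by ext; simp [hp]
  rw [hset, Set.encard_coe_eq_coe_finsetCard]
  exact_mod_cast (Multiset.toFinset_card_le _).trans (card_roots' p)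

lemma encard_setOf_eval_eq_le {R : Type*} [CommRing R] [IsDomain R] {p : R[X]}
    (hp : 0 < p.natDegree) (b : R) : {c | p.eval c = b}.encard ≤ p.natDegree := by
  have hdeg : (p - C b).natDegree = p.natDegree := natDegree_sub_C
  have h := encard_setOf_eval_eq_zero_le (ne_zero_of_natDegree_gt (hdeg ▸ hp))
  simpa [hdeg, sub_eq_zero] using h

lemma encard_setOf_eval_derivative_eq_zero_le {R : Type*} [CommRing R] [IsDomain R] [CharZero R]
    {p : R[X]} (hp : 0 < p.natDegree) :
    {c | (derivative p).eval c = 0}.encard ≤ ↑(p.natDegree - 1) := by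
  rw [← natDegree_derivative]
  exact encard_setOf_eval_eq_zero_le (mt derivative_eq_zero.mp hp.ne')

variable {L : Type*} [Field L] {p q : L[X]} {s n : ℕ}

lemma natDegree_resultant_dilationQuotient_le (hp : p.natDegree = n) (hq : q.natDegree = n)
    (hs : s < n) :
    (resultant (dilationQuotient p 0) (dilationQuotient q s)).natDegree ≤ 2 * (n * (n - 1)) := by
  refine (natDegree_resultant_le (d := n)
    (fun i ↦ (natDegree_coeff_dilationQuotient_le p 0 i).trans_eq hp)
    (fun i ↦ (natDegree_coeff_dilationQuotient_le q s i).trans_eq hq) _ _).trans_eq ?_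
  rw [natDegree_dilationQuotient (by lia), natDegree_dilationQuotient (by lia), hp, hq]
  ring

variable [IsAlgClosed L]

lemma eval_resultant_dilationQuotient_eq_zero_iff (hp : p.natDegree = n) (hq : q.natDegree = n)
    (hs : s < n) (z : L) :
    (resultant (dilationQuotient p 0) (dilationQuotient q s)).eval z = 0 ↔
      ∃ y, (dilationQuotient p 0).evalEval z y = 0 ∧ (dilationQuotient q s).evalEval z y = 0 :=
  eval_resultant_eq_zero_iff
    (eval_leadingCoeff_dilationQuotient_ne_zero (hp ▸ Nat.zero_lt_of_lt hs) z)
    (eval_leadingCoeff_dilationQuotient_ne_zero (hq ▸ hs) z)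

variable [CharZero L]

lemma resultant_dilationQuotient_ne_zero (hp : p.natDegree = n) (hq : q.natDegree = n)
    (hs : s < n) (hco : n.Coprime s) :
    resultant (dilationQuotient p 0) (dilationQuotient q s) ≠ 0 := by
  have hp0 : p.leadingCoeff ≠ 0 := leadingCoeff_ne_zero.mpr (ne_zero_of_natDegree_gt (hp ▸ hs))
  have hq0 : q.leadingCoeff ≠ 0 := leadingCoeff_ne_zero.mpr (ne_zero_of_natDegree_gt (hq ▸ hs))
  intro h
  obtain ⟨y, hy0, hys⟩ :=
    (eval_resultant_dilationQuotient_eq_zero_iff hp hq hs 0).mp (by rw [h, eval_zero])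
  rw [evalEval_zero_dilationQuotient, hp, mul_eq_zero_iff_left hp0] at hy0
  rw [evalEval_zero_dilationQuotient, hq, mul_eq_zero_iff_left hq0] at hys
  have hgn : ∑ i ∈ Finset.range n, y ^ i = 0 := by simpa using hy0
  have hgs : ∑ i ∈ Finset.range s, y ^ i = 0 := by simpa [hgn] using hys
  have pow_eq_one {k : ℕ} (hk : ∑ i ∈ Finset.range k, y ^ i = 0) : y ^ k = 1 := by
    rw [← sub_eq_zero, ← geom_sum_mul, hk, zero_mul]
  have hy : y = 1 := by
    simpa [hco.gcd_eq_one] using pow_gcd_eq_one.mpr ⟨pow_eq_one hgn, pow_eq_one hgs⟩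
  exact Nat.cast_ne_zero.mpr (Nat.ne_zero_of_lt hs) (by simpa [hy] using hgn : (n : L) = 0)

lemma encard_setOf_eval_dilation_le (hp : p.natDegree = n) (hq : q.natDegree = n) (hs : s < n)
    (hco : n.Coprime s) :
    {c | c ≠ 0 ∧ ∃ d, c ≠ d ∧ p.eval d = p.eval c ∧
      q.eval d = (d / c) ^ s * q.eval c}.encard ≤ ↑(2 * (n * (n - 1))) := by
  rw [← inv_injective.encard_image]
  refine (Set.encard_le_encard ?_).trans ((encard_setOf_eval_eq_zero_le
    (resultant_dilationQuotient_ne_zero hp hq hs hco)).trans (Nat.cast_le.mpr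
      (natDegree_resultant_dilationQuotient_le hp hq hs)))
  rintro _ ⟨c, ⟨hc, d, hcd, hpd, hqd⟩, rfl⟩
  exact (eval_resultant_dilationQuotient_eq_zero_iff hp hq hs _).mpr ⟨d / c,
    evalEval_dilationQuotient_eq_zero hc hcd (by simpa using hpd),
    evalEval_dilationQuotient_eq_zero hc hcd hqd⟩

lemma encard_setOf_collision_of_dilation_le {β : Type*} (hp : p.natDegree = n)
    (hq : q.natDegree = n) (hs : s < n) (hco : n.Coprime s) (f : L → β) :
    {b | ∃ c d, c ≠ 0 ∧ d ≠ 0 ∧ c ≠ d ∧ p.eval d = p.eval c ∧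
      q.eval d * c ^ s = q.eval c * d ^ s ∧ f c = b ∧ f d = b}.encard ≤ ↑(n * (n - 1)) := by
  set S := {c | c ≠ 0 ∧ ∃ d, c ≠ d ∧ p.eval d = p.eval c ∧ q.eval d = (d / c) ^ s * q.eval c}
  have hS : 2 * {b | ∃ c ∈ S, ∃ d ∈ S, c ≠ d ∧ f c = b ∧ f d = b}.encard ≤
      ↑(2 * (n * (n - 1))) :=
    (two_mul_encard_setOf_collision_le S f).trans (encard_setOf_eval_dilation_le hp hq hs hco)
  rw [Nat.cast_mul, Nat.cast_ofNat, ENat.mul_le_mul_left_iff (by simp) (by simp)] at hS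
  refine (Set.encard_le_encard ?_).trans hS
  rintro b ⟨c, d, hc, hd, hcd, hpcd, hqcd, hfc, hfd⟩
  refine ⟨c, ⟨hc, d, hcd, hpcd, ?_⟩, d, ⟨hd, c, hcd.symm, hpcd.symm, ?_⟩, hcd, hfc, hfd⟩
  · rw [div_pow, div_mul_eq_mul_div, eq_div_iff (pow_ne_zero _ hc), hqcd, mul_comm]
  · rw [div_pow, div_mul_eq_mul_div, eq_div_iff (pow_ne_zero _ hd), ← hqcd, mul_comm]

end Collision

section EulerDifference

variable {L : Type*} [Field L]

/-- The polynomial `m g - θ g`, where `θ = X d/dX` is the Euler operator. At a critical point it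
has the value `m g`, and it does not change when a multiple of `X ^ m` is added to `g`. -/
noncomputable def eulerDifference (g : L[X]) (m : ℕ) : L[X] := C (m : L) * g - X * derivative g

variable {g q : L[X]} {a c : L} {m s : ℕ}

lemma coeff_eulerDifference (g : L[X]) (m i : ℕ) :
    (eulerDifference g m).coeff i = (m - i) * g.coeff i := by
  rw [eulerDifference, coeff_sub, coeff_C_mul]
  rcases i with - | i
  · simp
  · rw [coeff_X_mul, coeff_derivative]
    push_cast
    ring

lemma eulerDifference_add_C_mul_X_pow (q : L[X]) (a : L) (m s : ℕ) :
    eulerDifference (q + C a * X ^ s) m = eulerDifference q m + C ((m - s) * a) * X ^ s := by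
  ext i
  rw [coeff_add, coeff_eulerDifference, coeff_eulerDifference, coeff_add, coeff_C_mul_X_pow,
    coeff_C_mul_X_pow]
  split_ifs with h
  · rw [h]; ring
  · ring

lemma natDegree_eulerDifference [CharZero L] (hm : m < g.natDegree) :
    (eulerDifference g m).natDegree = g.natDegree := by
  refine natDegree_eq_of_le_of_coeff_ne_zero
    (natDegree_le_iff_coeff_eq_zero.mpr fun i hi ↦ ?_) ?_
  · rw [coeff_eulerDifference, coeff_eq_zero_of_natDegree_lt hi, mul_zero]
  · rw [coeff_eulerDifference]
    exact mul_ne_zero (sub_ne_zero.mpr (Nat.cast_injective.ne hm.ne))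
      (leadingCoeff_ne_zero.mpr (ne_zero_of_natDegree_gt hm))

lemma eval_eulerDifference (hc : (derivative g).eval c = 0) (m : ℕ) :
    (eulerDifference g m).eval c = m * g.eval c := by
  simp [eulerDifference, hc]

lemma eval_derivative_eulerDifference (hc : (derivative g).eval c = 0) (m : ℕ) :
    (derivative (eulerDifference g m)).eval c = -(c * (derivative (derivative g)).eval c) := by
  simp [eulerDifference, hc]

lemma eval_eulerDifference_of_add (hc : (derivative (q + C a * X ^ s)).eval c = 0) :
    (eulerDifference q s).eval c = s * (q + C a * X ^ s).eval c := by
  rw [← eval_eulerDifference hc, eulerDifference_add_C_mul_X_pow, sub_self]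
  simp

lemma eval_eulerDifference_zero_of_add (hc : (derivative (q + C a * X ^ s)).eval c = 0) :
    (eulerDifference q 0).eval c = s * a * c ^ s := by
  have h := eval_eulerDifference hc 0
  rw [eulerDifference_add_C_mul_X_pow] at h
  simp only [eval_add, eval_mul, eval_C, eval_X, eval_pow, Nat.cast_zero, zero_mul] at h
  linear_combination h

end EulerDifference

section MorseCount

variable {L : Type*} [Field L] {q : L[X]} {s : ℕ} {a : L}

lemma exists_of_not_isMorseAwayFromZero (h : ¬ IsMorseAwayFromZero (q + C a * X ^ s))
    (hs : 0 < s) : ∃ c, (derivative (q + C a * X ^ s)).eval c = 0 ∧ c ≠ 0 ∧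
      ((derivative (eulerDifference q s)).eval c = 0 ∨
        (eulerDifference q s).eval c = (eulerDifference q s).eval 0 ∨
        ∃ d, (derivative (q + C a * X ^ s)).eval d = 0 ∧ d ≠ 0 ∧ c ≠ d ∧
          (eulerDifference q s).eval d = (eulerDifference q s).eval c) := by
  rw [IsMorseAwayFromZero] at h
  push Not at h
  obtain ⟨c, hc0, hc, hmorse⟩ := h
  refine ⟨c, hc, hc0, ?_⟩
  by_contra! hne
  obtain ⟨hV', hV0, hV⟩ := hne
  refine hmorse ⟨hc, fun hc2 ↦ hV' ?_, fun d hd hdc ↦ ?_⟩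
  · have hVq : eulerDifference (q + C a * X ^ s) s = eulerDifference q s := by
      simp [eulerDifference_add_C_mul_X_pow]
    rw [← hVq, eval_derivative_eulerDifference hc, hc2, mul_zero, neg_zero]
  · by_contra hne
    rcases eq_or_ne d 0 with rfl | hd0
    · refine hV0 ?_
      rw [eval_eulerDifference_of_add hc, ← hdc]
      simp [eulerDifference, hs.ne']
    · refine hV d hd hd0 (Ne.symm hne) ?_
      rw [eval_eulerDifference_of_add hc, eval_eulerDifference_of_add hd, hdc]

variable [CharZero L]

lemma eq_of_eval_derivative_add_eq_zero {c : L} (hs : 0 < s) (hc0 : c ≠ 0)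
    (hc : (derivative (q + C a * X ^ s)).eval c = 0) :
    (eulerDifference q 0).eval c / (s * c ^ s) = a := by
  rw [eval_eulerDifference_zero_of_add hc, mul_right_comm, mul_div_cancel_left₀]
  exact mul_ne_zero (Nat.cast_ne_zero.mpr hs.ne') (pow_ne_zero _ hc0)

variable [IsAlgClosed L]

theorem encard_setOf_not_isMorseAwayFromZero_le (hs : 0 < s) (hsn : s < q.natDegree)
    (hco : q.natDegree.Coprime s) :
    {a : L | ¬ IsMorseAwayFromZero (q + C a * X ^ s)}.encard + 1 ≤
      ↑(q.natDegree ^ 2 + q.natDegree) := by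
  set n := q.natDegree
  set α : L → L := fun c ↦ (eulerDifference q 0).eval c / (s * c ^ s)
  have hα {a c : L} (hc0 : c ≠ 0) (hc : (derivative (q + C a * X ^ s)).eval c = 0) : α c = a :=
    eq_of_eval_derivative_add_eq_zero hs hc0 hc
  set V := eulerDifference q s
  have hV : V.natDegree = n := natDegree_eulerDifference hsn
  set A₁ := α '' {c | (derivative V).eval c = 0}
  set A₂ := α '' {c | V.eval c = V.eval 0}
  set A₃ := {a | ∃ c d, c ≠ 0 ∧ d ≠ 0 ∧ c ≠ d ∧ V.eval d = V.eval c ∧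
    (eulerDifference q 0).eval d * c ^ s = (eulerDifference q 0).eval c * d ^ s ∧
    α c = a ∧ α d = a}
  have hA₁ : A₁.encard ≤ ↑(n - 1) := (Set.encard_image_le _ _).trans
    (hV ▸ encard_setOf_eval_derivative_eq_zero_le (by lia))
  have hA₂ : A₂.encard ≤ n := (Set.encard_image_le _ _).trans
    (hV ▸ encard_setOf_eval_eq_le (by lia) _)
  have hA₃ : A₃.encard ≤ ↑(n * (n - 1)) := encard_setOf_collision_of_dilation_le hV
    (natDegree_eulerDifference (by lia)) hsn hco α
  have hsub : {a : L | ¬ IsMorseAwayFromZero (q + C a * X ^ s)} ⊆ A₁ ∪ A₂ ∪ A₃ := by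
    intro a ha
    obtain ⟨c, hc, hc0, h | h | ⟨d, hd, hd0, hcd, h⟩⟩ := exists_of_not_isMorseAwayFromZero ha hs
    · exact .inl (.inl ⟨c, h, hα hc0 hc⟩)
    · exact .inl (.inr ⟨c, h, hα hc0 hc⟩)
    · refine .inr ⟨c, d, hc0, hd0, hcd, h, ?_, hα hc0 hc, hα hd0 hd⟩
      rw [eval_eulerDifference_zero_of_add hc, eval_eulerDifference_zero_of_add hd]
      ring
  calc {a : L | ¬ IsMorseAwayFromZero (q + C a * X ^ s)}.encard + 1
      ≤ A₁.encard + A₂.encard + A₃.encard + 1 := by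
        gcongr
        exact (Set.encard_le_encard hsub).trans <| (Set.encard_union_le _ _).trans <| by
          gcongr
          exact Set.encard_union_le _ _
    _ ≤ ↑(n - 1) + ↑n + ↑(n * (n - 1)) + 1 := by gcongr
    _ ≤ ↑(n ^ 2 + n) := by
        obtain ⟨m, hm⟩ : ∃ m, n = m + 1 := ⟨n - 1, by lia⟩
        rw [hm, Nat.add_sub_cancel]
        norm_cast
        exact le_of_eq (by ring)

end MorseCount

section ExceptionalParameters

theorem encard_setOf_not_nonempty_gal_mulEquiv_perm_le {K : Type*} [Field K] [CharZero K]
    {q : K[X]} {s : ℕ} (hq : q.Monic) (hs : 0 < s) (hsn : s < q.natDegree)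
    (hco : q.natDegree.Coprime s) :
    {a : K | ¬ Nonempty (((genericShift (q + C a * X ^ s)).map (algebraMap K[X] (RatFunc K))).Gal
      ≃* Equiv.Perm (Fin q.natDegree))}.encard ≤ ↑(q.natDegree ^ 2 + q.natDegree) := by
  set φ := algebraMap K (AlgebraicClosure K)
  have hφ : (q.map φ).natDegree = q.natDegree := natDegree_map φ
  rw [← φ.injective.encard_image]
  refine (Set.encard_le_encard
    (t := insert (φ (-q.coeff s)) {a | ¬ IsMorseAwayFromZero (q.map φ + C a * X ^ s)}) ?_).trans
    ((Set.encard_insert_le _ _).trans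
      (hφ ▸ encard_setOf_not_isMorseAwayFromZero_le hs (hφ ▸ hsn) (hφ ▸ hco)))
  rintro _ ⟨a, ha, rfl⟩
  by_contra! h
  rw [Set.mem_insert_iff, not_or, Set.mem_ofPred, not_not, φ.injective.eq_iff] at h
  obtain ⟨hcoeff, hmorse⟩ := h
  have hlt : (C a * X ^ s).degree < q.degree :=
    degree_lt_degree ((natDegree_C_mul_X_pow_le a s).trans_lt hsn)
  have hdeg : (q + C a * X ^ s).natDegree = q.natDegree :=
    natDegree_add_eq_left_of_degree_lt hlt
  have hgal := IsMorseAwayFromZero.nonempty_gal_mulEquiv_perm (g := q + C a * X ^ s)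
    (L := AlgebraicClosure K) (by simpa using hmorse) (hq.add_of_left hlt) hs (hdeg ▸ hsn)
    (by simpa [add_eq_zero_iff_eq_neg', coeff_X_pow] using hcoeff) (hdeg ▸ hco)
  exact ha (hdeg ▸ hgal)

/-- The monic polynomial `X ^ n + b 1 X ^ (n - 1) + ⋯ + b (n - 1) X` without constant term, indexed
by codegree; the values of `b` outside `1, …, n - 1` are ignored. -/
noncomputable def codegreePolynomial {K : Type*} [CommSemiring K] (n : ℕ) (b : ℕ → K) : K[X] :=
  X ^ n + ∑ i ∈ Finset.Ico 1 n, C (b i) * X ^ (n - i)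

variable {K : Type*} [CommRing K] {n r : ℕ}

lemma degree_sum_Ico_C_mul_X_pow_sub_lt (n : ℕ) (b : ℕ → K) :
    (∑ i ∈ Finset.Ico 1 n, C (b i) * X ^ (n - i) : K[X]).degree < (n : WithBot ℕ) := by
  refine (degree_sum_le _ _).trans_lt ((Finset.sup_lt_iff (WithBot.bot_lt_coe n)).mpr fun i hi ↦ ?_)
  rw [Finset.mem_Ico] at hi
  exact (degree_C_mul_X_pow_le _ _).trans_lt (Nat.cast_lt.mpr (by lia))

lemma monic_codegreePolynomial (n : ℕ) (b : ℕ → K) : (codegreePolynomial n b).Monic :=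
  monic_X_pow_add (degree_sum_Ico_C_mul_X_pow_sub_lt n b)

lemma natDegree_codegreePolynomial [Nontrivial K] (n : ℕ) (b : ℕ → K) :
    (codegreePolynomial n b).natDegree = n := by
  rw [codegreePolynomial, natDegree_add_eq_left_of_degree_lt, natDegree_X_pow]
  simpa using degree_sum_Ico_C_mul_X_pow_sub_lt n b

lemma codegreePolynomial_update (hr : 0 < r) (hrn : r < n) (b : ℕ → K) (x : K) :
    codegreePolynomial n (Function.update b r x) =
      codegreePolynomial n (Function.update b r 0) + C x * X ^ (n - r) := by
  have hmem : r ∈ Finset.Ico 1 n := Finset.mem_Ico.mpr ⟨hr, hrn⟩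
  have hsum (y : K) : ∑ i ∈ (Finset.Ico 1 n).erase r, C (Function.update b r y i) * X ^ (n - i) =
      ∑ i ∈ (Finset.Ico 1 n).erase r, C (b i) * X ^ (n - i) :=
    Finset.sum_congr rfl fun i hi ↦ by rw [Function.update_of_ne (Finset.ne_of_mem_erase hi)]
  simp only [codegreePolynomial, ← Finset.add_sum_erase _ _ hmem, hsum, Function.update_self]
  simp only [map_zero]
  ring

lemma map_genericShift_codegreePolynomial {K : Type*} [Field K] (n : ℕ) (b : ℕ → K) :
    (genericShift (codegreePolynomial n b)).map (algebraMap K[X] (RatFunc K)) =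
      X ^ n + ∑ i ∈ Finset.Ico 1 n, C (RatFunc.C (b i)) * X ^ (n - i) + C RatFunc.X := by
  simp [map_genericShift, codegreePolynomial, Polynomial.map_sum, RatFunc.algebraMap_X]

end ExceptionalParameters

theorem generic_trinomial_symmetric_galois_group_general {R K : Type*} [CommRing R] [Field K]
    [CharZero K] [Algebra R K] [FaithfulSMul R K] (n r : ℕ) (hr : 0 < r) (hrn : r < n)
    (hco : Nat.Coprime n r) (a : ℕ → R) :
    {x : R | ¬ Nonempty
        ((X ^ n + ∑ i ∈ Finset.Ico 1 n,
            C (RatFunc.C (algebraMap R K (Function.update a r x i))) * X ^ (n - i) +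
            C (RatFunc.X) : Polynomial (RatFunc K)).Gal
          ≃* Equiv.Perm (Fin n))}.Finite ∧
    Set.ncard {x : R | ¬ Nonempty
        ((X ^ n + ∑ i ∈ Finset.Ico 1 n,
            C (RatFunc.C (algebraMap R K (Function.update a r x i))) * X ^ (n - i) +
            C (RatFunc.X) : Polynomial (RatFunc K)).Gal
          ≃* Equiv.Perm (Fin n))} ≤ n ^ 2 + n := by
  set q := codegreePolynomial n (Function.update (algebraMap R K ∘ a) r 0)
  have hq : q.natDegree = n := natDegree_codegreePolynomial n _
  have hbound := encard_setOf_not_nonempty_gal_mulEquiv_perm_le (q := q) (s := n - r)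
    (monic_codegreePolynomial n _) (Nat.sub_pos_of_lt hrn) (by lia)
    (hq.symm ▸ (Nat.coprime_self_sub_right hrn.le).mpr hco)
  rw [hq] at hbound
  have hinj := FaithfulSMul.algebraMap_injective R K
  rw [← Set.encard_le_coe_iff_finite_ncard_le, ← hinj.encard_image]
  refine (Set.encard_le_encard ?_).trans hbound
  rintro _ ⟨x, hx, rfl⟩
  rwa [Set.mem_ofPred, ← codegreePolynomial_update hr hrn, map_genericShift_codegreePolynomial,
    ← Function.comp_update]

/-- (Hering) Let `n` and `r` be coprime positive integers with `n > r`, and fix integers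
`a₁, …, a_{r-1}, a_{r+1}, …, a_{n-1}`. Then for all but at most `n² + n` integers `a_r`,
the polynomial `Xⁿ + a₁X^(n-1) + ⋯ + a_{n-1}X + t` has Galois group isomorphic to the full
symmetric group `Sₙ` over the rational function field `ℚ(t)`. -/
theorem generic_trinomial_symmetric_galois_group (n r : ℕ) (hr : 0 < r) (hrn : r < n)
    (hco : Nat.Coprime n r) (a : ℕ → ℤ) :
    {x : ℤ | ¬ Nonempty
        ((X ^ n + ∑ i ∈ Finset.Ico 1 n,
            Polynomial.C ((Function.update a r x i : RatFunc ℚ)) * X ^ (n - i) +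
            Polynomial.C (RatFunc.X) : Polynomial (RatFunc ℚ)).Gal
          ≃* Equiv.Perm (Fin n))}.Finite ∧
    Set.ncard {x : ℤ | ¬ Nonempty
        ((X ^ n + ∑ i ∈ Finset.Ico 1 n,
            Polynomial.C ((Function.update a r x i : RatFunc ℚ)) * X ^ (n - i) +
            Polynomial.C (RatFunc.X) : Polynomial (RatFunc ℚ)).Gal
          ≃* Equiv.Perm (Fin n))} ≤ n ^ 2 + n := by
  have hcast : (Int.cast : ℤ → RatFunc ℚ) = RatFunc.C ∘ algebraMap ℤ ℚ := by ext; simp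
  rw [hcast]
  exact generic_trinomial_symmetric_galois_group_general n r hr hrn hco a
end

section
/- Let n ≥ 9 be an integer and let G be a subgroup of the symmetric group S_n whose natural action on {1, …, n} is transitive, with G ≠ S_n and G ≠ A_n. Then the index of G in S_n satisfies [S_n : G] ≥ (1/2)·binom(n, ⌊n/2⌋), where ⌊n/2⌋ is the largest integer not exceeding n/2. -/
/-!
If `G` is imprimitive with `b` blocks of size `a`, then `|G| ≤ b! (a!) ^ b`, which is at most
`2 ⌊n/2⌋! ⌈n/2⌉!` as soon as `a` and `b` are at least `2`.

If `G` is primitive, it contains no three-cycle by Jordan's theorem. Bochert's argument then gives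
a base of size `⌊n/2⌋`: if `s` is a minimal base and `sᶜ` is not a base, there are elements of `G`
whose supports meet in a single point, and their commutator is a three-cycle. Hence `G` meets the
pointwise stabiliser of `⌊n/2⌋` points trivially and has index at least `⌈n/2⌉!`, which suffices
unless `n = 10`, where the bounds are `120` and `126`. The only divisor of `10!` in between is `120`
itself, and index `120` would make `G` sharply `5`-transitive. An element `g ∈ G` acting on five
points as `(0 1 2)(3 4)` then satisfies `g ^ 6 = 1`, and both `g ^ 2` and `g ^ 3` have exactly `4`
fixed points, so the number of fixed points of `g` is even, congruent to `1` modulo `3`, and less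
than `4`: a contradiction.
-/

open Equiv Equiv.Perm Function MulAction
open scoped Nat Pointwise commutatorElement

section Arithmetic

theorem factorial_succ_le_succ_pow (n : ℕ) : (n + 1)! ≤ (n + 1) ^ n := by
  calc (n + 1)! = (n + 1).descFactorial n := by
        simpa using (Nat.factorial_mul_descFactorial n.le_succ).symm
    _ ≤ (n + 1) ^ n := Nat.descFactorial_le_pow _ _

theorem factorial_half_mul_pow_le (n k : ℕ) :
    (n / 2)! * ((n + 1) / 2)! * (n / 2 + 1) ^ k ≤ ((n + k) / 2)! * ((n + k + 1) / 2)! := by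
  induction k with
  | zero => simp
  | succ k ih =>
    have hhalf : (n + (k + 1) + 1) / 2 = (n + k) / 2 + 1 := by omega
    calc (n / 2)! * ((n + 1) / 2)! * (n / 2 + 1) ^ (k + 1)
        = (n / 2)! * ((n + 1) / 2)! * (n / 2 + 1) ^ k * (n / 2 + 1) := by ring
      _ ≤ ((n + k) / 2)! * ((n + k + 1) / 2)! * ((n + k) / 2 + 1) := by gcongr; omega
      _ = ((n + (k + 1)) / 2)! * ((n + (k + 1) + 1) / 2)! := by
        rw [hhalf, Nat.factorial_succ, ← add_assoc]; ring

theorem succ_mul_factorial_le_pow {a b : ℕ} (ha : 2 ≤ a) (hb : 2 ≤ b) :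
    (b + 1) * a ! ≤ (a * b / 2 + 1) ^ a := by
  obtain ⟨c, rfl⟩ : ∃ c, a = c + 1 := ⟨a - 1, by omega⟩
  have hb' : b ≤ (c + 1) * b / 2 := by
    rw [Nat.le_div_iff_mul_le two_pos, mul_comm]; gcongr
  have hc : c + 1 ≤ (c + 1) * b / 2 := by
    rw [Nat.le_div_iff_mul_le two_pos]; gcongr
  calc (b + 1) * (c + 1)! ≤ (b + 1) * (c + 1) ^ c := by
        gcongr; exact factorial_succ_le_succ_pow c
    _ ≤ ((c + 1) * b / 2 + 1) * ((c + 1) * b / 2 + 1) ^ c := by gcongr; omega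
    _ = ((c + 1) * b / 2 + 1) ^ (c + 1) := (pow_succ' _ _).symm

theorem factorial_mul_factorial_pow_le {a b : ℕ} (ha : 2 ≤ a) (hb : 2 ≤ b) :
    b ! * a ! ^ b ≤ 2 * ((a * b / 2)! * ((a * b + 1) / 2)!) := by
  induction b, hb using Nat.le_induction with
  | base =>
    have hhalf : (a * 2 + 1) / 2 = a := by omega
    simp [hhalf, sq]
  | succ b hb ih =>
    calc (b + 1)! * a ! ^ (b + 1) = b ! * a ! ^ b * ((b + 1) * a !) := by
          rw [Nat.factorial_succ, pow_succ]; ring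
      _ ≤ 2 * ((a * b / 2)! * ((a * b + 1) / 2)!) * (a * b / 2 + 1) ^ a :=
        Nat.mul_le_mul ih (succ_mul_factorial_le_pow ha hb)
      _ ≤ 2 * ((a * (b + 1) / 2)! * ((a * (b + 1) + 1) / 2)!) := by
        rw [mul_assoc, mul_add_one]
        exact Nat.mul_le_mul_left 2 (factorial_half_mul_pow_le _ _)

theorem centralBinom_le_two_mul_factorial {n : ℕ} (hn : 6 ≤ n) : n.centralBinom ≤ 2 * n ! := by
  induction n, hn using Nat.le_induction with
  | base => decide
  | succ n hn ih =>
    have hsq : 2 * (2 * n + 1) ≤ (n + 1) * (n + 1) := by nlinarith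
    refine Nat.le_of_mul_le_mul_left ?_ n.succ_pos
    calc (n + 1) * (n + 1).centralBinom = 2 * (2 * n + 1) * n.centralBinom :=
          n.succ_mul_centralBinom_succ
      _ ≤ (n + 1) * (n + 1) * (2 * n !) := Nat.mul_le_mul hsq ih
      _ = (n + 1) * (2 * (n + 1)!) := by rw [Nat.factorial_succ]; ring

theorem choose_half_le_two_mul_factorial {n : ℕ} (hn : 9 ≤ n) (hn' : n ≠ 10) :
    n.choose (n / 2) ≤ 2 * ((n + 1) / 2)! := by
  obtain rfl | hn : n = 9 ∨ 11 ≤ n := by omega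
  · decide
  calc n.choose (n / 2) ≤ (2 * ((n + 1) / 2)).choose (n / 2) :=
        Nat.choose_le_choose _ (by omega)
    _ ≤ ((n + 1) / 2).centralBinom := Nat.choose_le_centralBinom _ _
    _ ≤ 2 * ((n + 1) / 2)! := centralBinom_le_two_mul_factorial (by omega)

lemma le_of_dvd_factorial_ten {m : ℕ} (hm : m ∣ 10!) (h : 120 < m) : 126 ≤ m := by
  by_contra! hlt
  interval_cases m <;> revert hm <;> decide

end Arithmetic

section BlockSystems

variable {G X : Type*} [Group G] [MulAction G X]

theorem exists_mulActionHom_orbit_of_isBlock [IsPretransitive G X] {S : Set X} (hS : IsBlock G S)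
    (hne : S.Nonempty) : ∃ p : X →[G] orbit G S, ∀ x C, p x = C ↔ x ∈ (C : Set X) := by
  choose q hq huniq using fun x ↦ (hS.isBlockSystem hne).1.2 x
  have hmem (x) (C : orbit G S) : (⟨q x, (hq x).1⟩ : orbit G S) = C ↔ x ∈ (C : Set X) :=
    ⟨fun h ↦ h ▸ (hq x).2, fun h ↦ Subtype.ext (huniq x C ⟨C.2, h⟩).symm⟩
  refine ⟨⟨fun x ↦ ⟨q x, (hq x).1⟩, fun g x ↦ ?_⟩, hmem⟩
  rw [hmem, orbit.coe_smul]
  exact Set.smul_mem_smul_set (hq x).2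

variable [Finite X] [FaithfulSMul G X]

theorem card_le_factorial_mul_prod_factorial {B : Type*} [Fintype B] [MulAction G B]
    (p : X →[G] B) :
    Nat.card G ≤ (Nat.card B)! * ∏ b, {x | p x = b}.ncard ! := by
  have hrange : Nat.card (toPermHom G B).range ≤ (Nat.card B)! :=
    Nat.card_perm (α := B) ▸ Subgroup.card_le_card_group _
  have hker : Nat.card (toPermHom G B).ker ≤ ∏ b, {x | p x = b}.ncard ! := by
    rw [← DomMulAct.stabilizer_ncard p, ← Nat.card_coe_set_eq]
    have hfix (g : (toPermHom G B).ker) : p ∘ toPerm (g : G) = p := by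
      funext x
      simpa using DFunLike.congr_fun (MonoidHom.mem_ker.1 g.2) (p x)
    refine Nat.card_le_card_of_injective (fun g ↦ ⟨toPerm (g : G), hfix g⟩) fun g h hgh ↦ ?_
    exact Subtype.ext (toPerm_injective (Subtype.ext_iff.1 hgh))
  rw [← (toPermHom G B).ker.index_mul_card, Subgroup.index_ker]
  exact Nat.mul_le_mul hrange hker

theorem card_le_factorial_mul_factorial_pow_of_isBlock [IsPretransitive G X] {S : Set X}
    (hS : IsBlock G S) (hne : S.Nonempty) :
    Nat.card G ≤ (orbit G S).ncard ! * S.ncard ! ^ (orbit G S).ncard := by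
  have := Fintype.ofFinite (orbit G S)
  obtain ⟨p, hp⟩ := exists_mulActionHom_orbit_of_isBlock hS hne
  have hfiber (C : orbit G S) : {x | p x = C}.ncard = S.ncard := by
    obtain ⟨_, g, rfl⟩ := C
    simp only [hp, Set.ofPred_mem_eq]
    exact Set.ncard_smul_set g S
  simpa [hfiber, Nat.card_coe_set_eq, ← Nat.card_eq_fintype_card]
    using card_le_factorial_mul_prod_factorial p

theorem card_le_of_not_isPreprimitive [IsPretransitive G X] (hG : ¬ IsPreprimitive G X) :
    Nat.card G ≤ 2 * ((Nat.card X / 2)! * ((Nat.card X + 1) / 2)!) := by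
  obtain ⟨S, hS, hS_nontrivial, hS_ne_univ⟩ :
      ∃ S : Set X, IsBlock G S ∧ S.Nontrivial ∧ S ≠ Set.univ := by
    contrapose! hG
    exact ⟨fun {S} hS ↦ S.subsingleton_or_nontrivial.imp_right (hG S hS)⟩
  have hcard := hS.ncard_block_mul_ncard_orbit_eq hS_nontrivial.nonempty
  have hS_two : 2 ≤ S.ncard := Set.one_lt_ncard_iff_nontrivial.2 hS_nontrivial
  have horbit_two : 2 ≤ (orbit G S).ncard := by
    by_contra! hlt
    exact hS_ne_univ (hS.eq_univ_of_card_lt (hcard ▸ by gcongr))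
  calc Nat.card G ≤ (orbit G S).ncard ! * S.ncard ! ^ (orbit G S).ncard :=
        card_le_factorial_mul_factorial_pow_of_isBlock hS hS_nontrivial.nonempty
    _ ≤ 2 * ((Nat.card X / 2)! * ((Nat.card X + 1) / 2)!) :=
      hcard ▸ factorial_mul_factorial_pow_le hS_two horbit_two

end BlockSystems

theorem isThreeCycle_commutator {X : Type*} [Fintype X] [DecidableEq X] {g h : Perm X} {d : X}
    (hg : g d ≠ d) (hh : h d ≠ d) (hgh : ∀ x ≠ d, g x = x ∨ h x = x) :
    ⁅g, h⁆.IsThreeCycle := by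
  have hhgd : h (g d) = g d := (hgh _ hg).resolve_left fun e ↦ hg (g.injective e)
  have hhd : g d ≠ h d := fun e ↦ hg (h.injective (hhgd.trans e))
  -- Hence `g` may be replaced by the transposition `swap d (g d)` in the commutator.
  have hdisj : ((swap d (g d))⁻¹ * g).Disjoint h := by
    intro x
    obtain rfl | hx := eq_or_ne x d
    · exact .inl (by simp)
    refine or_iff_not_imp_right.2 fun hhx ↦ ?_
    have hgx := (hgh x hx).resolve_right hhx
    have hxgd : x ≠ g d := by rintro rfl; exact hhx hhgd
    simp [hgx, swap_apply_of_ne_of_ne hx hxgd]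
  have hcomm : ⁅g, h⁆ = swap (g d) d * swap (g d) (h d) := by
    calc ⁅g, h⁆ = swap d (g d) * ((swap d (g d))⁻¹ * g * h) * g⁻¹ * h⁻¹ := by group
      _ = swap d (g d) * (h * (swap d (g d))⁻¹ * h⁻¹) := by rw [hdisj.commute.eq]; group
      _ = swap d (g d) * swap (h d) (h (g d)) := by rw [swap_inv, swap_apply_apply]
      _ = swap (g d) d * swap (g d) (h d) := by rw [hhgd, swap_comm d, swap_comm (h d)]
  rw [hcomm]
  exact isThreeCycle_swap_mul_swap_same hg hhd hh.symm

lemma ncard_ptsOfPeriod_mul_modEq {X : Type*} [Finite X] (f : X → X) (n p : ℕ) [Fact p.Prime] :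
    (ptsOfPeriod f (n * p)).ncard ≡ (ptsOfPeriod f n).ncard [MOD p] := by
  classical
  have := Fintype.ofFinite X
  have hmaps : Set.MapsTo f^[n] (ptsOfPeriod f (n * p)) (ptsOfPeriod f (n * p)) :=
    Semiconj.mapsTo_ptsOfPeriod (Function.Commute.self_iterate f n).symm _
  let F : Function.End (ptsOfPeriod f (n * p)) := hmaps.restrict
  have hF : F ^ p ^ 1 = 1 := by
    have hiterate : F ^ p = F^[p] :=
      hom_coe_pow (fun e : Function.End _ ↦ e) rfl (fun _ _ ↦ rfl) F p
    rw [pow_one, hiterate]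
    funext x
    apply Subtype.ext
    rw [hmaps.coe_iterate_restrict, ← iterate_mul]
    exact x.2
  have hfix : Subtype.val '' fixedPoints F = ptsOfPeriod f n := by
    ext x
    refine ⟨?_, fun hx ↦ ⟨⟨x, hx.mul_const p⟩, Subtype.ext hx, rfl⟩⟩
    rintro ⟨y, hy, rfl⟩
    exact congrArg Subtype.val hy
  rw [← hfix, Set.ncard_image_of_injective _ Subtype.val_injective]
  simpa only [← Nat.card_coe_set_eq, Nat.card_eq_fintype_card] using card_fixedPoints_modEq hF

lemma mem_ptsOfPeriod_iff_of_semiconj {X Y : Type*} {f : Y → Y} {g : X → X} {ι : Y → X}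
    (h : Semiconj ι f g) (hι : Injective ι) {n : ℕ} {y : Y} :
    ι y ∈ ptsOfPeriod g n ↔ y ∈ ptsOfPeriod f n := by
  change g^[n] (ι y) = ι y ↔ f^[n] y = y
  rw [← (h.iterate_right n).eq, hι.eq_iff]

lemma ncard_ptsOfPeriod_le_of_semiconj {X Y : Type*} [Finite X] {f : Y → Y} {g : X → X} {ι : Y → X}
    (h : Semiconj ι f g) (hι : Injective ι) (n : ℕ) :
    (ptsOfPeriod f n).ncard ≤ (ptsOfPeriod g n).ncard := by
  rw [← Set.ncard_image_of_injective _ hι]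
  exact Set.ncard_le_ncard
    (Set.image_subset_iff.2 fun _ ↦ (mem_ptsOfPeriod_iff_of_semiconj h hι).2)

lemma ptsOfPeriod_eq_univ_iff {X : Type*} {g : Perm X} {n : ℕ} :
    ptsOfPeriod g n = Set.univ ↔ g ^ n = 1 := by
  simp only [Set.eq_univ_iff_forall, Equiv.ext_iff, ← iterate_eq_pow]
  rfl

theorem card_ne_ten_of_ncard_ptsOfPeriod {X : Type*} [Finite X] {f : X → X}
    (h6 : ptsOfPeriod f 6 = Set.univ) (h2_lower : 2 ≤ (ptsOfPeriod f 2).ncard)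
    (h2_upper : (ptsOfPeriod f 2).ncard < 5) (h3_upper : (ptsOfPeriod f 3).ncard < 5)
    (h13 : (ptsOfPeriod f 1).ncard < (ptsOfPeriod f 3).ncard) : Nat.card X ≠ 10 := by
  intro hX
  have h6_mod_three := ncard_ptsOfPeriod_mul_modEq f 2 3
  have h6_mod_two := ncard_ptsOfPeriod_mul_modEq f 3 2
  have h3_mod_three := ncard_ptsOfPeriod_mul_modEq f 1 3
  have h2_mod_two := ncard_ptsOfPeriod_mul_modEq f 1 2
  simp only [Nat.reduceMul, h6, Set.ncard_univ, hX, Nat.ModEq] at *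
  omega

theorem card_ne_ten_of_semiconj {X : Type*} [Finite X] {g : Perm X}
    (hg : ∀ k, g ^ k ≠ 1 → (ptsOfPeriod g k).ncard < 5) {ι : Fin 5 → X} (hι : Injective ι)
    (h : Semiconj ι (swap 0 1 * swap 1 2 * swap 3 4 : Perm (Fin 5)) g) : Nat.card X ≠ 10 := by
  generalize hc : (swap 0 1 * swap 1 2 * swap 3 4 : Perm (Fin 5)) = c at h
  have hc1 : ptsOfPeriod c 1 = ∅ := Set.eq_empty_of_forall_notMem <| by
    change ∀ i, ¬ IsPeriodicPt c 1 i
    subst hc; decide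
  have hc2 : ptsOfPeriod c 2 = {3, 4} := Set.ext <| by
    change ∀ i, IsPeriodicPt c 2 i ↔ i = 3 ∨ i = 4
    subst hc; decide
  have hc3 : ptsOfPeriod c 3 = {0, 1, 2} := Set.ext <| by
    change ∀ i, IsPeriodicPt c 3 i ↔ i = 0 ∨ i = 1 ∨ i = 2
    subst hc; decide
  have hc6 : ptsOfPeriod c 6 = Set.univ := ptsOfPeriod_eq_univ_iff.2 (by subst hc; decide)
  have hlower (k : ℕ) := ncard_ptsOfPeriod_le_of_semiconj h hι k
  have hmem {k : ℕ} {i : Fin 5} : ι i ∈ ptsOfPeriod g k ↔ i ∈ ptsOfPeriod c k :=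
    mem_ptsOfPeriod_iff_of_semiconj h hι
  have hupper {k : ℕ} {i : Fin 5} (hi : i ∉ ptsOfPeriod c k) : (ptsOfPeriod g k).ncard < 5 :=
    hg k fun hgk ↦ hi (hmem.1 (ptsOfPeriod_eq_univ_iff.2 hgk ▸ Set.mem_univ _))
  have hg6 : g ^ 6 = 1 := by
    by_contra hne
    exact (hg 6 hne).not_ge (by simpa [hc6] using hlower 6)
  refine card_ne_ten_of_ncard_ptsOfPeriod (f := g) (ptsOfPeriod_eq_univ_iff.2 hg6) ?_
    (hupper (i := 0) (by simp [hc2])) (hupper (i := 3) (by simp [hc3]))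
    (Set.ncard_lt_ncard ⟨fun x hx ↦ IsPeriodicPt.const_mul hx 3, fun hsub ↦ ?_⟩)
  · exact (Set.ncard_pair (by decide)).symm.trans_le (hc2 ▸ hlower 2)
  · have h0 : ι 0 ∈ ptsOfPeriod g 3 := hmem.2 (by simp [hc3])
    exact Set.notMem_empty _ (hc1 ▸ hmem.1 (hsub h0))

section Bases

variable {X : Type*} {G : Subgroup (Perm X)} {s t : Set X}

/-- A *base* of a permutation group `G` is a set of points whose pointwise stabiliser in `G` is
trivial, so that an element of `G` is determined by its action on a base. -/
def IsBase (G : Subgroup (Perm X)) (s : Set X) : Prop :=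
  Disjoint G (fixingSubgroup (Perm X) s)

lemma isBase_iff : IsBase G s ↔ ∀ g ∈ G, (∀ x ∈ s, g x = x) → g = 1 := by
  simp only [IsBase, Subgroup.disjoint_def, mem_fixingSubgroup_iff, Perm.smul_def]

lemma isBase_univ (G : Subgroup (Perm X)) : IsBase G Set.univ :=
  isBase_iff.2 fun _ _ h ↦ Equiv.ext fun x ↦ h x trivial

lemma IsBase.mono (hs : IsBase G s) (hst : s ⊆ t) : IsBase G t :=
  Disjoint.mono_right (fixingSubgroup_antitone _ _ hst) hs

theorem isBase_compl_of_minimal [Fintype X] [DecidableEq X]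
    (hG : ∀ g ∈ G, ¬ g.IsThreeCycle) (hs : Minimal (IsBase G) s) : IsBase G sᶜ := by
  refine isBase_iff.2 fun g hg hgs ↦ ?_
  by_contra hg1
  obtain ⟨d, hds, hgd⟩ : ∃ d ∈ s, g d ≠ d := by
    by_contra! hfix
    exact hg1 (isBase_iff.1 hs.1 g hg hfix)
  obtain ⟨h, hh, hhs, hh1⟩ : ∃ h ∈ G, (∀ x ∈ s \ {d}, h x = x) ∧ h ≠ 1 := by
    have hsd : ¬ IsBase G (s \ {d}) :=
      hs.not_prop_of_lt (Set.sdiff_singleton_ssubset.2 hds)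
    simpa only [isBase_iff, not_forall, exists_prop] using hsd
  have hhd : h d ≠ d := fun hhd ↦ hh1 <| isBase_iff.1 hs.1 h hh fun x hx ↦ by
    obtain rfl | hxd := eq_or_ne x d
    exacts [hhd, hhs x ⟨hx, hxd⟩]
  refine hG ⁅g, h⁆ ?_ (isThreeCycle_commutator hgd hhd fun x hxd ↦ ?_)
  · exact G.commutator_le_self (Subgroup.commutator_mem_commutator hg hh)
  · by_cases hx : x ∈ s
    exacts [.inr (hhs x ⟨hx, hxd⟩), .inl (hgs x hx)]

theorem exists_isBase_ncard_eq_half [Fintype X] [DecidableEq X]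
    (hG : ∀ g ∈ G, ¬ g.IsThreeCycle) : ∃ s : Set X, IsBase G s ∧ s.ncard = Nat.card X / 2 := by
  obtain ⟨s, -, hs⟩ := exists_minimal_le_of_wellFoundedLT (IsBase G) _ (isBase_univ G)
  obtain ⟨t, ht, hcard⟩ : ∃ t, IsBase G t ∧ t.ncard ≤ Nat.card X / 2 := by
    have hadd := s.ncard_add_ncard_compl
    obtain h | h : s.ncard ≤ Nat.card X / 2 ∨ sᶜ.ncard ≤ Nat.card X / 2 := by omega
    exacts [⟨s, hs.1, h⟩, ⟨sᶜ, isBase_compl_of_minimal hG hs, h⟩]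
  obtain ⟨u, htu, -, hu⟩ := Set.exists_subsuperset_card_eq t.subset_univ hcard
    (by rw [Set.ncard_univ]; exact Nat.div_le_self _ _)
  exact ⟨u, ht.mono htu, hu⟩

lemma card_fixingSubgroup [Finite X] (s : Set X) :
    Nat.card (fixingSubgroup (Perm X) s) = (Nat.card X - s.ncard)! := by
  have hindex := (isMultiplyPretransitive X s.ncard).index_of_fixingSubgroup_mul rfl
  rw [← Nat.card_perm, ← (fixingSubgroup (Perm X) s).index_mul_card] at hindex
  exact (Nat.eq_of_mul_eq_mul_left (Nat.pos_of_ne_zero Subgroup.index_ne_zero_of_finite)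
    hindex).symm

lemma IsBase.factorial_le_index [Finite X] (hs : IsBase G s) :
    (Nat.card X - s.ncard)! ≤ G.index := by
  refine Nat.le_of_mul_le_mul_left ?_ (Nat.card_pos (α := G))
  rw [G.card_mul_index, ← card_fixingSubgroup, ← Nat.card_prod]
  exact Nat.card_le_card_of_injective _ (Subgroup.mul_injective_of_disjoint hs)

lemma IsBase.isComplement' [Finite X] (hs : IsBase G s)
    (hindex : G.index = (Nat.card X - s.ncard)!) :
    G.IsComplement' (fixingSubgroup (Perm X) s) :=
  Subgroup.isComplement'_of_card_mul_and_disjoint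
    (by rw [card_fixingSubgroup, ← hindex, G.card_mul_index]) hs

lemma exists_mem_eqOn_of_isComplement' (h : G.IsComplement' (fixingSubgroup (Perm X) s))
    (σ : Perm X) : ∃ g ∈ G, Set.EqOn g σ s := by
  obtain ⟨⟨g, k⟩, rfl⟩ := h.2 σ
  refine ⟨g, g.2, fun x hx ↦ ?_⟩
  have hk : (k : Perm X) x = x := (mem_fixingSubgroup_iff (Perm X)).1 k.2 x hx
  simp [hk]

lemma isBase_of_isComplement' [Finite X] (h : G.IsComplement' (fixingSubgroup (Perm X) s))
    (hst : s.ncard ≤ t.ncard) : IsBase G t := by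
  classical
  obtain ⟨u, hut, hu⟩ := Set.exists_subset_card_eq hst
  refine IsBase.mono (isBase_iff.2 fun g hg hgu ↦ ?_) hut
  obtain ⟨e⟩ : Nonempty (s ≃ u) := Finite.card_eq.1 hu.symm
  obtain ⟨k, hk, hke⟩ := exists_mem_eqOn_of_isComplement' h e.extendSubtype
  have hconj : k⁻¹ * g * k = 1 := by
    refine isBase_iff.1 h.disjoint _ (G.mul_mem (G.mul_mem (G.inv_mem hk) hg) hk) fun x hx ↦ ?_
    have hkx : k x ∈ u := hke hx ▸ e.extendSubtype_mem x hx
    simp [hgu _ hkx]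
  simpa [mul_assoc, inv_mul_eq_one] using hconj

theorem not_isComplement'_of_card_eq_ten [Finite X] (hX : Nat.card X = 10) (hs : s.ncard = 5) :
    ¬ G.IsComplement' (fixingSubgroup (Perm X) s) := by
  intro hcompl
  obtain ⟨e⟩ : Nonempty (Fin 5 ≃ s) := Finite.card_eq.1 (by simpa using hs.symm)
  let ι : Fin 5 ↪ X := e.toEmbedding.trans (Embedding.subtype (· ∈ s))
  let c : Perm (Fin 5) := swap 0 1 * swap 1 2 * swap 3 4
  obtain ⟨g, hg, hgc⟩ := exists_mem_eqOn_of_isComplement' hcompl (c.viaEmbedding ι)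
  refine card_ne_ten_of_semiconj (g := g) (fun k hk ↦ ?_) ι.injective (fun i ↦ ?_) hX
  · by_contra! hcard
    refine hk (isBase_iff.1 (isBase_of_isComplement' hcompl (hs.trans_le hcard)) _
      (G.pow_mem hg k) fun x hx ↦ ?_)
    rw [← iterate_eq_pow]
    exact hx
  · exact (viaEmbedding_apply c ι i).symm.trans (hgc (e i).2).symm

end Bases

section PermutationGroups

variable {X : Type*} {G : Subgroup (Perm X)}

theorem choose_half_le_two_mul_index_of_not_isPreprimitive [Finite X] [IsPretransitive G X]
    (hG : ¬ IsPreprimitive G X) : (Nat.card X).choose (Nat.card X / 2) ≤ 2 * G.index := by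
  have hsub : Nat.card X - Nat.card X / 2 = (Nat.card X + 1) / 2 := by omega
  have hchoose := Nat.choose_mul_factorial_mul_factorial (Nat.div_le_self (Nat.card X) 2)
  rw [hsub, mul_assoc] at hchoose
  refine Nat.le_of_mul_le_mul_right ?_
    (mul_pos (Nat.card X / 2).factorial_pos ((Nat.card X + 1) / 2).factorial_pos)
  calc (Nat.card X).choose (Nat.card X / 2) * ((Nat.card X / 2)! * ((Nat.card X + 1) / 2)!)
      = Nat.card G * G.index := by rw [hchoose, G.card_mul_index, Nat.card_perm]
    _ ≤ 2 * ((Nat.card X / 2)! * ((Nat.card X + 1) / 2)!) * G.index :=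
      Nat.mul_le_mul_right _ (card_le_of_not_isPreprimitive hG)
    _ = 2 * G.index * ((Nat.card X / 2)! * ((Nat.card X + 1) / 2)!) := by ring

variable [Fintype X] [DecidableEq X]

theorem choose_half_le_two_mul_index_of_isPreprimitive (hX : 9 ≤ Nat.card X)
    [IsPreprimitive G X] (hG : ¬ alternatingGroup X ≤ G) :
    (Nat.card X).choose (Nat.card X / 2) ≤ 2 * G.index := by
  have hthree (g) (hg : g ∈ G) : ¬ g.IsThreeCycle := fun h3 ↦
    hG (alternatingGroup_le_of_isPreprimitive_of_isThreeCycle_mem ‹_› h3 hg)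
  obtain ⟨s, hs, hcard⟩ := exists_isBase_ncard_eq_half hthree
  have hindex := hs.factorial_le_index
  obtain h10 | h10 := eq_or_ne (Nat.card X) 10
  · rw [h10] at hcard ⊢
    rw [h10, hcard] at hindex
    have hne : G.index ≠ 120 := fun h ↦ not_isComplement'_of_card_eq_ten h10 hcard
      (hs.isComplement' (by rw [h, h10, hcard]; rfl))
    have hdvd : G.index ∣ 10! := h10 ▸ Nat.card_perm (α := X) ▸ G.index_dvd_card
    have hlt : 120 < G.index := lt_of_le_of_ne hindex hne.symm
    calc Nat.choose 10 5 = 2 * 126 := by decide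
      _ ≤ 2 * G.index := Nat.mul_le_mul_left 2 (le_of_dvd_factorial_ten hdvd hlt)
  · have hsub : Nat.card X - s.ncard = (Nat.card X + 1) / 2 := by omega
    rw [hsub] at hindex
    exact (choose_half_le_two_mul_factorial hX h10).trans (Nat.mul_le_mul_left 2 hindex)

lemma eq_top_or_eq_alternatingGroup_of_alternatingGroup_le [Nontrivial X]
    (hG : alternatingGroup X ≤ G) : G = ⊤ ∨ G = alternatingGroup X := by
  have hdvd : G.index ∣ 2 :=
    alternatingGroup.index_eq_two (α := X) ▸ Subgroup.index_dvd_of_le hG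
  exact ((Nat.dvd_prime Nat.prime_two).1 hdvd).imp Subgroup.index_eq_one.1
    eq_alternatingGroup_of_index_eq_two

theorem index_lower_bound_transitive_subgroup_general (hX : 9 ≤ Nat.card X) [IsPretransitive G X]
    (hG1 : G ≠ ⊤) (hG2 : G ≠ alternatingGroup X) :
    (Nat.card X).choose (Nat.card X / 2) ≤ 2 * G.index := by
  by_cases hprim : IsPreprimitive G X
  · have : Nontrivial X := Finite.one_lt_card_iff_nontrivial.1 (by omega)
    exact choose_half_le_two_mul_index_of_isPreprimitive hX fun h ↦
      (eq_top_or_eq_alternatingGroup_of_alternatingGroup_le h).elim hG1 hG2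
  · exact choose_half_le_two_mul_index_of_not_isPreprimitive hprim

end PermutationGroups

/-- For `n ≥ 9`, every transitive subgroup `G` of `Sₙ` other than `Sₙ` and `Aₙ` has index at
least `(1/2)·binom(n, ⌊n/2⌋)` in `Sₙ`. -/
theorem index_lower_bound_transitive_subgroup (n : ℕ) (hn : 9 ≤ n)
    (G : Subgroup (Equiv.Perm (Fin n)))
    (htrans : ∀ i j : Fin n, ∃ σ ∈ G, σ i = j)
    (hG1 : G ≠ ⊤) (hG2 : G ≠ alternatingGroup (Fin n)) :
    (n.choose (n / 2) : ℝ) / 2 ≤ (G.index : ℝ) := by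
  have : IsPretransitive G (Fin n) := ⟨by simpa [Subgroup.smul_def] using htrans⟩
  simpa [div_le_iff₀', ← Nat.cast_le (α := ℝ)] using
    index_lower_bound_transitive_subgroup_general (by simpa using hn) hG1 hG2
end
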